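/- Let 𝒯 = (A,T,G) be a regularity structure on ℝ^d containing the polynomial sector: a sector T̄ ⊂ T spanned by symbols X^k (k a d-dimensional multiindex), with X^k ∈ T_{|k|}, on which every Γ ∈ G acts by Γ X^k = (X−h)^k for some h ∈ ℝ^d. Let β > 0, N ≥ 1, and let 𝓘 : T → T be an abstract integration map: linear, 𝓘 T_α ⊂ T_{α+β} for all α ∈ A with α + β ∈ A and α+β ∉ ℕ, 𝓘 T̄ = 0, and Γ𝓘τ − 𝓘Γτ ∈ T̄ for every Γ ∈ G, τ ∈ T. Let K = Σ_{n≥0} K_n : ℝ^d \ {0} → ℝ be a kernel where each K_n is smooth, supported in the ball of radius 2^{−n} about 0, satisfies sup_x |D^k K_n(x)| ≤ C̄ 2^{n(d−β+|k|)} for all |k| ≤ N+r, and ∫ K_n(x) P(x) dx = 0 for every polynomial P of degree at most N. Let (Π,Γ) be an admissible model: a model such that (Π_x X^k)(y) = (y−x)^k and Π_x 𝓘τ = K * Π_x τ − Π_x 𝓙(x)τ for all τ ∈ T_α with α ≤ N, where 𝓙(x)τ = Σ_{|k| < α+β} (X^k/k!) Σ_{n≥0} (Π_x τ)(D^k K_n(x−·)).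 Let R be the reconstruction operator for (Π,Γ). Then for every f ∈ D^γ with 0 < γ < N−β and γ+β ∉ ℕ, the function (𝓚f)(x) = 𝓘 f(x) + 𝓙(x) f(x) + (𝓝f)(x), where (𝓝f)(x) = Σ_{|k| < γ+β} (X^k/k!) Σ_{n≥0} (Rf − Π_x f(x))(D^k K_n(x−·)), belongs to D^{γ+β}, and R(𝓚f) = K * (Rf). (Multi-level Schauder estimate.) -/

import Mathlib

/-!
Write `s = γ + β`. The heart of the matter is that `K * Rf` is described near each point `x` by
`Π_x (𝓚f)(x)`: tested at scale `λ` about `x`, the two differ by `O(λ ^ s)`, locally uniformly in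
`x` (`local_expansion`). By admissibility the terms `𝓙` cancel (`Pmap_Kmap`), so the error is the
sum over `n` of `u = Rf - Π_x f(x)` tested against `K_n ⋆ ψ` minus its Taylor polynomial in the
variable of `ψ`. Since `u` is `O(λ ^ γ)` at `x`, each scale `2⁻ⁿ ≤ λ` is estimated term by term
(`bound_cv`, `bound_Dk`), and each scale `2⁻ⁿ ≥ λ` by Taylor's formula with multiindices
(`taylor_bound`, `bound_tg`). As `s` is not an integer, both regimes decay geometrically away from
the scale `λ`, so the sum is `O(λ ^ s)` (`scale_sum`). The single scale `n = 0`, where the enlarged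
support leaves the range of the hypothesis on `u`, is covered by the continuity of `u`, uniformly in
`x` (`uniform_error`).

Membership of `𝓚f` in `D^s`: the increment `𝓚f(x) - Γ_{xy} 𝓚f(y)` equals `𝓘(f(x) - Γ_{xy} f(y))`,
which has the right size since `f ∈ D^γ`, plus a polynomial (`Kmap_increment_mem`). Comparing the
local expansions at `x` and at `y` against test functions of scale `|x - y|` that are dual to the
monomials (`exists_dual`) bounds the coefficients of this polynomial (`near_bound`). Points that are
far apart are joined by inserting midpoints (`inD_of_near`).

Identification of the reconstruction: if `ζ` reconstructs `𝓚f`, then `ζ - K * Rf` is `O(λ ^ s)` at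
scale `λ` about every point, with `s > 0`, and a functional with this property vanishes: decompose a
test function by a partition of unity of mesh `1 / p` and let `p → ∞` (`eq_zero_of_small`).
-/

open MeasureTheory Metric Set Filter

noncomputable section

/-- Euclidean space `ℝ^d`. -/
abbrev Rd (d : ℕ) := EuclideanSpace ℝ (Fin d)

/-- The rescaled and recentred test function `φ_x^λ (y) = λ^{-d} φ(λ⁻¹(y-x))`. -/
def scal {d : ℕ} (φ : Rd d → ℝ) (x : Rd d) (l : ℝ) : Rd d → ℝ :=
  fun y => (l ^ d)⁻¹ * φ (l⁻¹ • (y - x))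

/-- The set `B_r` of `C^r` test functions supported in the unit ball with `C^r` norm at most 1. -/
def Br (d r : ℕ) : Set (Rd d → ℝ) :=
  {φ | ContDiff ℝ (r : ℕ∞) φ ∧ tsupport φ ⊆ closedBall (0 : Rd d) 1 ∧
    ∀ i ≤ r, ∀ y, ‖iteratedFDeriv ℝ i φ y‖ ≤ 1}

/-- A smooth compactly supported function. -/
def IsTestFunction {d : ℕ} (f : Rd d → ℝ) : Prop :=
  ContDiff ℝ (⊤ : ℕ∞) f ∧ HasCompactSupport f

/-- The local continuity estimate making a linear functional on functions a distribution:
on every compact set it is bounded by some `C^k` norm of the test function. -/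
def IsDistribution {d : ℕ} (u : (Rd d → ℝ) →ₗ[ℝ] ℝ) : Prop :=
  ∀ K : Set (Rd d), IsCompact K → ∃ C : ℝ, ∃ k : ℕ, ∀ f : Rd d → ℝ,
    IsTestFunction f → tsupport f ⊆ K → ∀ B : ℝ,
      (∀ i ≤ k, ∀ y, ‖iteratedFDeriv ℝ i f y‖ ≤ B) → |u f| ≤ C * B

/-- Total weight `|k|` of a multiindex. -/
def wt {d : ℕ} (k : Fin d → ℕ) : ℕ := ∑ j, k j

/-- Factorial `k!` of a multiindex. -/
def mfac {d : ℕ} (k : Fin d → ℕ) : ℕ := ∏ j, (k j).factorial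

/-- The monomial `x^k = ∏_j x_j^{k_j}`. -/
def mono {d : ℕ} (k : Fin d → ℕ) (x : Rd d) : ℝ := ∏ j, (x j) ^ (k j)

/-- Partial derivative in the `j`-th coordinate direction. -/
def pderiv1 {d : ℕ} (j : Fin d) (f : Rd d → ℝ) : Rd d → ℝ :=
  fun x => fderiv ℝ f x (EuclideanSpace.single j (1 : ℝ))

/-- Iterated partial derivative in the `j`-th coordinate direction. -/
def pderivPow {d : ℕ} (j : Fin d) : ℕ → (Rd d → ℝ) → Rd d → ℝ
  | 0 => fun f => f
  | n + 1 => fun f => pderiv1 j (pderivPow j n f)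

/-- The multiindex partial derivative `D^k f`. -/
def Dk {d : ℕ} (k : Fin d → ℕ) (f : Rd d → ℝ) : Rd d → ℝ :=
  ((List.ofFn fun j : Fin d => pderivPow j (k j)).foldr (· ∘ ·) id) f

section RegularityStructures

variable {d : ℕ} {ι : Type} [Fintype ι] [DecidableEq ι]
  {T : ι → Type} [∀ i, NormedAddCommGroup (T i)] [∀ i, NormedSpace ℝ (T i)]

/-- `G` is a structure group for the grading `deg`: a group of invertible linear maps on
`T = ⊕_α T_α` such that `Γ τ - τ` has components only in degrees `< α` for `τ ∈ T_α`. -/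
def IsStructureGroup (deg : ι → ℝ) (G : Set ((∀ i, T i) ≃ₗ[ℝ] (∀ i, T i))) : Prop :=
  (LinearEquiv.refl ℝ (∀ i, T i)) ∈ G ∧
  (∀ g₁ ∈ G, ∀ g₂ ∈ G, (g₂.trans g₁) ∈ G) ∧
  (∀ g ∈ G, g.symm ∈ G) ∧
  (∀ g ∈ G, ∀ (i : ι) (v : T i), ∀ j : ι, deg i ≤ deg j →
    (g (Pi.single i v) - Pi.single i v) j = 0)

/-- `(Pmap, Γ)` is a model for the regularity structure `(deg, T, G)` on `ℝ^d`,
with analytical bounds tested against test functions in `B_r`. -/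
def IsModel (r : ℕ) (deg : ι → ℝ) (G : Set ((∀ i, T i) ≃ₗ[ℝ] (∀ i, T i)))
    (Pmap : Rd d → (∀ i, T i) →ₗ[ℝ] ((Rd d → ℝ) →ₗ[ℝ] ℝ))
    (Γ : Rd d → Rd d → ((∀ i, T i) ≃ₗ[ℝ] (∀ i, T i))) : Prop :=
  (∀ x y : Rd d, Γ x y ∈ G) ∧
  (∀ (x : Rd d) (τ : ∀ i, T i), IsDistribution (Pmap x τ)) ∧
  (∀ x y z : Rd d, ∀ τ : ∀ i, T i, Γ x y (Γ y z τ) = Γ x z τ) ∧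
  (∀ x y : Rd d, ∀ (τ : ∀ i, T i) (ψ : Rd d → ℝ), Pmap x (Γ x y τ) ψ = Pmap y τ ψ) ∧
  (∀ K : Set (Rd d), IsCompact K → ∃ C : ℝ,
    (∀ (i : ι) (v : T i), ∀ x ∈ K, ∀ φ ∈ Br d r, ∀ l : ℝ, 0 < l → l ≤ 1 →
      |Pmap x (Pi.single i v) (scal φ x l)| ≤ C * l ^ (deg i) * ‖v‖) ∧
    (∀ i j : ι, deg j < deg i → ∀ v : T i, ∀ x ∈ K, ∀ y ∈ K,
      ‖Γ x y (Pi.single i v) j‖ ≤ C * ‖x - y‖ ^ (deg i - deg j) * ‖v‖))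

/-- `f` belongs to the space `D^γ` of modelled distributions. -/
def InD (deg : ι → ℝ) (γ : ℝ) (Γ : Rd d → Rd d → ((∀ i, T i) ≃ₗ[ℝ] (∀ i, T i)))
    (f : Rd d → ∀ i, T i) : Prop :=
  (∀ (x : Rd d) (i : ι), γ ≤ deg i → f x i = 0) ∧
  (∀ K : Set (Rd d), IsCompact K → ∃ C : ℝ, ∀ i : ι, deg i < γ →
    ∀ x ∈ K, ∀ y ∈ K, ‖(f x - Γ x y (f y)) i‖ ≤ C * ‖x - y‖ ^ (γ - deg i))

/-- The defining property of the reconstruction `R f` of `f ∈ D^γ`: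
`R f` looks like `Π_x f(x)` near every point `x`, to order `γ`. -/
def Reconstructs (r : ℕ) (Pmap : Rd d → (∀ i, T i) →ₗ[ℝ] ((Rd d → ℝ) →ₗ[ℝ] ℝ))
    (γ : ℝ) (f : Rd d → ∀ i, T i) (ζ : (Rd d → ℝ) →ₗ[ℝ] ℝ) : Prop :=
  IsDistribution ζ ∧
  ∀ K : Set (Rd d), IsCompact K → ∃ C : ℝ, ∀ x ∈ K, ∀ φ ∈ Br d r,
    ∀ l : ℝ, 0 < l → l ≤ 1 →
      |ζ (scal φ x l) - Pmap x (f x) (scal φ x l)| ≤ C * l ^ γ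

end RegularityStructures

/-- The (finite) set of multiindices `k` with `|k| < c`. -/
def multiIdxLt (d : ℕ) (c : ℝ) : Finset (Fin d → ℕ) :=
  (Finset.Iic fun _ : Fin d => ⌈c⌉₊).filter fun k => (wt k : ℝ) < c

section Schauder

variable {d : ℕ} {ι : Type} [Fintype ι] [DecidableEq ι]
  {T : ι → Type} [∀ i, NormedAddCommGroup (T i)] [∀ i, NormedSpace ℝ (T i)]

/-- The operator `𝓙(x) τ = Σ_i Σ_{|k| < deg i + β} (X^k/k!) Σ_n (Π_x τ_i)(D^k K_n(x-·))`. -/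
def Jmap (deg : ι → ℝ) (β : ℝ)
    (Pmap : Rd d → (∀ i, T i) →ₗ[ℝ] ((Rd d → ℝ) →ₗ[ℝ] ℝ))
    (Kn : ℕ → Rd d → ℝ) (X : (Fin d → ℕ) → ∀ i, T i)
    (x : Rd d) (τ : ∀ i, T i) : ∀ i, T i :=
  ∑ i : ι, ∑ k ∈ multiIdxLt d (deg i + β),
    (((mfac k : ℝ))⁻¹ *
      ∑' n : ℕ, Pmap x (Pi.single i (τ i)) fun y => Dk k (Kn n) (x - y)) • X k

/-- The operator `(𝓝 f)(x) = Σ_{|k| < γ+β} (X^k/k!) Σ_n (Rf - Π_x f(x))(D^k K_n(x-·))`. -/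
def Nmap (γβ : ℝ)
    (Pmap : Rd d → (∀ i, T i) →ₗ[ℝ] ((Rd d → ℝ) →ₗ[ℝ] ℝ))
    (Rf : (Rd d → ℝ) →ₗ[ℝ] ℝ)
    (Kn : ℕ → Rd d → ℝ) (X : (Fin d → ℕ) → ∀ i, T i)
    (f : Rd d → ∀ i, T i) (x : Rd d) : ∀ i, T i :=
  ∑ k ∈ multiIdxLt d γβ,
    (((mfac k : ℝ))⁻¹ *
      ∑' n : ℕ, (Rf (fun y => Dk k (Kn n) (x - y)) -
        Pmap x (f x) fun y => Dk k (Kn n) (x - y))) • X k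

end Schauder

/-! ### Directional derivatives of smooth functions -/

/-- Shorthand for `C^∞` real functions on `ℝ^d`. -/
abbrev Sm {d : ℕ} (f : Rd d → ℝ) : Prop := ContDiff ℝ (⊤ : ℕ∞) f

/-- The directional derivative `∂_v f`. -/
def dv {d : ℕ} (v : Rd d) (f : Rd d → ℝ) : Rd d → ℝ := fun x => fderiv ℝ f x v

section Calculus

variable {d : ℕ}

lemma Sm.diff {f : Rd d → ℝ} (hf : Sm f) : Differentiable ℝ f :=
  hf.differentiable (by simp)

lemma Sm.nat {f : Rd d → ℝ} (hf : Sm f) (n : ℕ) : ContDiff ℝ (n : ℕ∞) f :=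
  hf.of_le (by exact_mod_cast le_top)

lemma Sm.fd {f : Rd d → ℝ} (hf : Sm f) : ContDiff ℝ (⊤ : ℕ∞) (fderiv ℝ f) :=
  hf.fderiv_right (by simp)

lemma dv_smooth {f : Rd d → ℝ} (hf : Sm f) (v : Rd d) : Sm (dv v f) :=
  hf.fd.clm_apply contDiff_const

lemma dv_comm {f : Rd d → ℝ} (hf : Sm f) (v w : Rd d) : dv v (dv w f) = dv w (dv v f) := by
  have key : ∀ (x v w : Rd d), dv v (dv w f) x = fderiv ℝ (fderiv ℝ f) x v w := by
    intro x v w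
    have h := (hf.fd.differentiable (by simp) x).hasFDerivAt
    have := (h.clm_apply (hasFDerivAt_const w x)).fderiv
    change fderiv ℝ (fun y => fderiv ℝ f y w) x v = _
    rw [this]; simp
  funext x
  rw [key, key]
  exact (hf.contDiffAt.isSymmSndFDerivAt (by
    rw [minSmoothness_of_isRCLikeNormedField]
    exact WithTop.coe_le_coe.2 (le_top : (2 : ℕ∞) ≤ ⊤))) v w

lemma pderiv1_eq_dv (j : Fin d) (f : Rd d → ℝ) :
    pderiv1 j f = dv (EuclideanSpace.single j (1 : ℝ)) f := rfl

lemma pderivPow_smooth {f : Rd d → ℝ} (hf : Sm f) (j : Fin d) (n : ℕ) :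
    Sm (pderivPow j n f) := by
  induction n with
  | zero => exact hf
  | succ n ih => exact dv_smooth ih _

lemma dv_pderivPow {f : Rd d → ℝ} (hf : Sm f) (v : Rd d) (j : Fin d) (n : ℕ) :
    dv v (pderivPow j n f) = pderivPow j n (dv v f) := by
  induction n with
  | zero => rfl
  | succ n ih =>
    change dv v (dv _ (pderivPow j n f)) = dv _ (pderivPow j n (dv v f))
    rw [dv_comm (pderivPow_smooth hf j n), ih]

/-- `D^k` restricted to the coordinates in the list `L`; a recursion-friendly form of `Dk`. -/
def DL (L : List (Fin d)) (k : Fin d → ℕ) (f : Rd d → ℝ) : Rd d → ℝ :=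
  L.foldr (fun j g => pderivPow j (k j) g) f

lemma Dk_eq_DL (k : Fin d → ℕ) (f : Rd d → ℝ) : Dk k f = DL (List.finRange d) k f := by
  unfold Dk DL
  rw [List.ofFn_eq_map]
  generalize List.finRange d = L
  induction L with
  | nil => rfl
  | cons a L ih => simp only [List.map_cons, List.foldr_cons, Function.comp_apply, ih]

lemma DL_smooth {f : Rd d → ℝ} (hf : Sm f) (L : List (Fin d)) (k : Fin d → ℕ) :
    Sm (DL L k f) := by
  induction L with
  | nil => exact hf
  | cons a L ih => exact pderivPow_smooth ih _ _

lemma dv_DL {f : Rd d → ℝ} (hf : Sm f) (v : Rd d) (L : List (Fin d)) (k : Fin d → ℕ) :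
    dv v (DL L k f) = DL L k (dv v f) := by
  induction L with
  | nil => rfl
  | cons a L ih =>
    change dv v (pderivPow a (k a) (DL L k f)) = pderivPow a (k a) (DL L k (dv v f))
    rw [dv_pderivPow (DL_smooth hf L k), ih]

lemma DL_congr {f : Rd d → ℝ} (L : List (Fin d)) (k k' : Fin d → ℕ) (h : ∀ j ∈ L, k j = k' j) :
    DL L k f = DL L k' f := by
  induction L with
  | nil => rfl
  | cons a L ih =>
    change pderivPow a (k a) (DL L k f) = pderivPow a (k' a) (DL L k' f)
    rw [ih fun j hj => h j (List.mem_cons_of_mem _ hj), h a List.mem_cons_self]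

lemma pderiv1_DL {f : Rd d → ℝ} (hf : Sm f) (j : Fin d) (L : List (Fin d)) (hL : L.Nodup)
    (hj : j ∈ L) (k : Fin d → ℕ) :
    pderiv1 j (DL L k f) = DL L (k + Pi.single j 1) f := by
  induction L with
  | nil => simp at hj
  | cons a L ih =>
    rw [List.nodup_cons] at hL
    change pderiv1 j (pderivPow a (k a) (DL L k f)) =
      pderivPow a ((k + Pi.single j 1 : Fin d → ℕ) a) (DL L (k + Pi.single j 1) f)
    by_cases haj : a = j
    · subst haj
      have : DL L (k + Pi.single a 1) f = DL L k f := by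
        apply DL_congr
        intro i hi
        have : i ≠ a := fun h => hL.1 (h ▸ hi)
        simp [this]
      rw [this]
      simp only [Pi.add_apply, Pi.single_eq_same]
      rfl
    · have hj' : j ∈ L := by
        rcases List.mem_cons.1 hj with h | h
        · exact absurd h.symm haj
        · exact h
      rw [pderiv1_eq_dv, dv_pderivPow (DL_smooth hf L k), ← pderiv1_eq_dv, ih hL.2 hj']
      simp [haj]

lemma Dk_smooth {f : Rd d → ℝ} (hf : Sm f) (k : Fin d → ℕ) : Sm (Dk k f) := by
  rw [Dk_eq_DL]; exact DL_smooth hf _ _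

lemma dv_Dk {f : Rd d → ℝ} (hf : Sm f) (v : Rd d) (k : Fin d → ℕ) :
    dv v (Dk k f) = Dk k (dv v f) := by
  rw [Dk_eq_DL, Dk_eq_DL, dv_DL hf]

lemma pderiv1_Dk {f : Rd d → ℝ} (hf : Sm f) (j : Fin d) (k : Fin d → ℕ) :
    pderiv1 j (Dk k f) = Dk (k + Pi.single j 1) f := by
  rw [Dk_eq_DL, Dk_eq_DL, pderiv1_DL hf j _ (List.nodup_finRange d) (List.mem_finRange j)]

lemma Dk_zero (f : Rd d → ℝ) : Dk 0 f = f := by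
  rw [Dk_eq_DL]
  generalize List.finRange d = L
  induction L with
  | nil => rfl
  | cons a L ih => exact ih

lemma wt_add_single (k : Fin d → ℕ) (j : Fin d) : wt (k + Pi.single j 1) = wt k + 1 := by
  simp [wt, Finset.sum_add_distrib]

/-- Peeling off the last direction of an iterated derivative keeps everything scalar-valued. -/
lemma iterD_succ {f : Rd d → ℝ} (hf : Sm f) (n : ℕ) (x : Rd d) (m : Fin (n + 1) → Rd d) :
    iteratedFDeriv ℝ (n + 1) f x m =
      iteratedFDeriv ℝ n (dv (m (Fin.last n)) f) x (Fin.init m) := by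
  rw [iteratedFDeriv_succ_apply_right]
  have h := (ContinuousLinearMap.apply ℝ ℝ (m (Fin.last n))).iteratedFDeriv_comp_left
    (x := x) (i := n) hf.fd.contDiffAt (by exact_mod_cast le_top)
  have h2 : (⇑(ContinuousLinearMap.apply ℝ ℝ (m (Fin.last n))) ∘ fderiv ℝ f) =
      dv (m (Fin.last n)) f := rfl
  rw [h2] at h
  rw [h]
  rfl

lemma iterD_apply_smooth {f : Rd d → ℝ} (hf : Sm f) (n : ℕ) (m : Fin n → Rd d) :
    Sm (fun x => iteratedFDeriv ℝ n f x m) := by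
  induction n generalizing f with
  | zero => simpa using hf
  | succ n ih =>
    simp_rw [iterD_succ hf]
    exact ih (dv_smooth hf _) _

lemma norm_iterD_dv_le {f : Rd d → ℝ} (hf : Sm f) (v : Rd d) (n : ℕ) (x : Rd d) :
    ‖iteratedFDeriv ℝ n (dv v f) x‖ ≤ ‖v‖ * ‖iteratedFDeriv ℝ (n + 1) f x‖ := by
  apply ContinuousMultilinearMap.opNorm_le_bound (by positivity)
  intro m
  have h := iterD_succ hf n x (Fin.snoc m v : Fin (n + 1) → Rd d)
  simp only [Fin.snoc_last, Fin.init_snoc] at h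
  rw [← h]
  refine (ContinuousMultilinearMap.le_opNorm _ _).trans (le_of_eq ?_)
  rw [Fin.prod_univ_castSucc]
  simp only [Fin.snoc_last, Fin.snoc_castSucc]
  ring

lemma norm_iterD_iterD_le {f : Rd d → ℝ} (hf : Sm f) (M n : ℕ) (m : Fin n → Rd d) (x : Rd d) :
    ‖iteratedFDeriv ℝ M (fun y => iteratedFDeriv ℝ n f y m) x‖ ≤
      (∏ i, ‖m i‖) * ‖iteratedFDeriv ℝ (M + n) f x‖ := by
  induction n generalizing f with
  | zero => simp
  | succ n ih =>
    simp_rw [iterD_succ hf]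
    refine (ih (dv_smooth hf _) _).trans ?_
    rw [Fin.prod_univ_castSucc, mul_assoc]
    refine mul_le_mul_of_nonneg_left ?_ (Finset.prod_nonneg fun _ _ => norm_nonneg _)
    exact norm_iterD_dv_le hf _ _ _

lemma norm_iterD_pderivPow_le {f : Rd d → ℝ} (hf : Sm f) (j : Fin d) (a n : ℕ) (x : Rd d) :
    ‖iteratedFDeriv ℝ n (pderivPow j a f) x‖ ≤ ‖iteratedFDeriv ℝ (n + a) f x‖ := by
  induction a generalizing n with
  | zero => exact le_rfl
  | succ a ih =>
    refine (norm_iterD_dv_le (pderivPow_smooth hf j a) _ n x).trans ?_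
    simp only [PiLp.norm_single, norm_one, one_mul]
    refine (ih (n + 1)).trans (le_of_eq ?_)
    rw [add_assoc, add_comm 1 a]

lemma norm_iterD_Dk_le {f : Rd d → ℝ} (hf : Sm f) (k : Fin d → ℕ) (n : ℕ) (x : Rd d) :
    ‖iteratedFDeriv ℝ n (Dk k f) x‖ ≤ ‖iteratedFDeriv ℝ (n + wt k) f x‖ := by
  have h : ∀ (L : List (Fin d)) (n : ℕ),
      ‖iteratedFDeriv ℝ n (DL L k f) x‖ ≤ ‖iteratedFDeriv ℝ (n + (L.map k).sum) f x‖ := by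
    intro L
    induction L with
    | nil => intro n; exact le_rfl
    | cons a L ih =>
      intro n
      refine (norm_iterD_pderivPow_le (DL_smooth hf L k) a (k a) n x).trans ?_
      have e : n + ((a :: L).map k).sum = n + k a + (L.map k).sum := by
        rw [List.map_cons, List.sum_cons, add_assoc]
      rw [e]
      exact ih _
  rw [Dk_eq_DL]
  have e : wt k = ((List.finRange d).map k).sum := by
    rw [wt, ← List.ofFn_eq_map, List.sum_ofFn]
  rw [e]
  exact h _ n

lemma exists_Dk_eq_iterD (n : ℕ) (s : Fin n → Fin d) :
    ∃ k : Fin d → ℕ, wt k = n ∧ ∀ f : Rd d → ℝ, Sm f → ∀ x,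
      iteratedFDeriv ℝ n f x (fun i => EuclideanSpace.single (s i) (1 : ℝ)) = Dk k f x := by
  induction n with
  | zero => exact ⟨0, by simp [wt], fun f _ x => by simp [Dk_zero]⟩
  | succ n ih =>
    obtain ⟨k, hk, h⟩ := ih (Fin.init s)
    refine ⟨k + Pi.single (s (Fin.last n)) 1, by rw [wt_add_single, hk], fun f hf x => ?_⟩
    rw [iterD_succ hf, ← pderiv1_Dk hf, pderiv1_eq_dv, dv_Dk hf, ← h _ (dv_smooth hf _)]
    rfl

/-- The partial derivatives of order `n` control the full `n`-th derivative, by expanding each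
argument in the standard basis. -/
lemma norm_iterD_le_of_Dk {f : Rd d → ℝ} (hf : Sm f) (n : ℕ) (x : Rd d) (B : ℝ)
    (hB : ∀ k : Fin d → ℕ, wt k = n → |Dk k f x| ≤ B) :
    ‖iteratedFDeriv ℝ n f x‖ ≤ (d : ℝ) ^ n * B := by
  by_cases hne : Nonempty (Fin n → Fin d)
  swap
  · -- here `d = 0 < n`, and all directions vanish
    have hn : n ≠ 0 := by
      rintro rfl; exact hne ⟨Fin.elim0⟩
    have hd : d = 0 := by
      by_contra h
      exact hne ⟨fun _ => ⟨0, Nat.pos_of_ne_zero h⟩⟩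
    subst hd
    have : iteratedFDeriv ℝ n f x = 0 := by
      ext m
      have : m = 0 := Subsingleton.elim _ _
      rw [this]
      have : Nonempty (Fin n) := ⟨⟨0, Nat.pos_of_ne_zero hn⟩⟩
      exact (iteratedFDeriv ℝ n f x).map_zero
    rw [this]; simp [hn]
  have hB0 : 0 ≤ B := by
    obtain ⟨s⟩ := hne
    obtain ⟨k, hk, -⟩ := exists_Dk_eq_iterD n s
    exact (abs_nonneg _).trans (hB k hk)
  apply ContinuousMultilinearMap.opNorm_le_bound (by positivity)
  intro m
  have hm : m = fun i => ∑ j : Fin d, (m i) j • EuclideanSpace.single j (1 : ℝ) := by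
    funext i
    ext l
    simp [Finset.sum_apply, Pi.single_apply]
  have h1 : iteratedFDeriv ℝ n f x m = ∑ s : Fin n → Fin d,
      (∏ i, (m i) (s i)) * iteratedFDeriv ℝ n f x
        (fun i => EuclideanSpace.single (s i) (1 : ℝ)) := by
    conv_lhs => rw [hm]
    rw [ContinuousMultilinearMap.map_sum]
    refine Finset.sum_congr rfl fun s _ => ?_
    rw [ContinuousMultilinearMap.map_smul_univ, smul_eq_mul]
  rw [h1]
  refine (norm_sum_le _ _).trans ?_
  have h2 : ∀ s ∈ (Finset.univ : Finset (Fin n → Fin d)), ‖(∏ i, (m i) (s i)) *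
      iteratedFDeriv ℝ n f x (fun i => EuclideanSpace.single (s i) (1 : ℝ))‖ ≤
      (∏ i, ‖m i‖) * B := by
    intro s _
    obtain ⟨k, hk, h⟩ := exists_Dk_eq_iterD n s
    rw [h f hf, norm_mul, norm_prod]
    refine mul_le_mul ?_ (hB k hk) (norm_nonneg _) (by positivity)
    exact Finset.prod_le_prod (fun _ _ => norm_nonneg _) fun i _ => PiLp.norm_apply_le (m i) (s i)
  refine (Finset.sum_le_card_nsmul _ _ _ h2).trans (le_of_eq ?_)
  simp
  ring

end Calculus

/-! ### Taylor's formula with multiindices -/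

section Taylor

variable {d : ℕ}

lemma mfac_add_single (k : Fin d → ℕ) (j : Fin d) :
    mfac (k + Pi.single j 1) = mfac k * (k j + 1) := by
  have : ∀ i, ((k + Pi.single j 1 : Fin d → ℕ) i).factorial =
      (k i).factorial * (if i = j then k j + 1 else 1) := by
    intro i
    by_cases h : i = j
    · subst h; simp [Nat.factorial_succ, mul_comm]
    · simp [h]
  simp only [mfac, this, Finset.prod_mul_distrib, Finset.prod_ite_eq', Finset.mem_univ, if_true]

lemma mono_add_single (k : Fin d → ℕ) (j : Fin d) (h : Rd d) :
    mono (k + Pi.single j 1) h = mono k h * h j := by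
  have : ∀ i, (h i) ^ ((k + Pi.single j 1 : Fin d → ℕ) i) =
      (h i) ^ (k i) * (if i = j then h j else 1) := by
    intro i
    by_cases hij : i = j
    · subst hij; simp [pow_succ]
    · simp [hij]
  simp only [mono, this, Finset.prod_mul_distrib, Finset.prod_ite_eq', Finset.mem_univ, if_true]

lemma mono_smul (k : Fin d → ℕ) (t : ℝ) (h : Rd d) :
    mono k (t • h) = t ^ wt k * mono k h := by
  simp [mono, wt, mul_pow, Finset.prod_mul_distrib, Finset.prod_pow_eq_pow_sum]

lemma abs_mono_le (k : Fin d → ℕ) (h : Rd d) : |mono k h| ≤ ‖h‖ ^ wt k := by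
  rw [mono, Finset.abs_prod, wt, ← Finset.prod_pow_eq_pow_sum]
  refine Finset.prod_le_prod (fun _ _ => abs_nonneg _) fun i _ => ?_
  rw [abs_pow]
  exact pow_le_pow_left₀ (abs_nonneg _) (PiLp.norm_apply_le h i) _

lemma mono_zero (h : Rd d) : mono 0 h = 1 := by simp [mono]

lemma continuous_mono (k : Fin d → ℕ) : Continuous (mono k : Rd d → ℝ) := by
  unfold mono
  fun_prop

lemma mem_multiIdxLt {c : ℝ} {k : Fin d → ℕ} : k ∈ multiIdxLt d c ↔ (wt k : ℝ) < c := by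
  unfold multiIdxLt
  rw [Finset.mem_filter, Finset.mem_Iic, and_iff_right_iff_imp]
  intro h j
  have h1 : k j ≤ wt k := Finset.single_le_sum (f := k) (fun _ _ => Nat.zero_le _) (Finset.mem_univ j)
  exact h1.trans (Nat.lt_ceil.2 h).le

/-- Multiindices of weight exactly `m`. -/
def idx (d m : ℕ) : Finset (Fin d → ℕ) := Finset.piAntidiag Finset.univ m

lemma mem_idx {m : ℕ} {k : Fin d → ℕ} : k ∈ idx d m ↔ wt k = m := by
  simp [idx, wt]

lemma sum_multiIdxLt {E : Type*} [AddCommMonoid E] (c : ℝ) (F : (Fin d → ℕ) → E) :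
    ∑ k ∈ multiIdxLt d c, F k = ∑ m ∈ Finset.range ⌈c⌉₊, ∑ k ∈ idx d m, F k := by
  rw [← Finset.sum_fiberwise_of_maps_to (s := multiIdxLt d c) (t := Finset.range ⌈c⌉₊) (g := wt)]
  · refine Finset.sum_congr rfl fun m hm => Finset.sum_congr ?_ fun _ _ => rfl
    ext k
    rw [Finset.mem_filter, mem_multiIdxLt, mem_idx, ← Nat.lt_ceil]
    rw [Finset.mem_range] at hm
    constructor
    · exact fun h => h.2
    · rintro rfl; exact ⟨hm, rfl⟩
  · intro k hk
    rw [mem_multiIdxLt] at hk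
    exact Finset.mem_range.2 (Nat.lt_ceil.2 hk)

/-- The order-`m` term `Σ_{|k|=m} h^k/k! D^k L(w)` of the Taylor expansion of `L` at `w`. -/
def tayl (m : ℕ) (L : Rd d → ℝ) (w h : Rd d) : ℝ :=
  ∑ k ∈ idx d m, (mfac k : ℝ)⁻¹ * mono k h * Dk k L w

lemma mfac_ne_zero (k : Fin d → ℕ) : (mfac k : ℝ) ≠ 0 := by
  have : mfac k ≠ 0 := Finset.prod_ne_zero_iff.2 fun j _ => Nat.factorial_ne_zero _
  exact_mod_cast this

lemma dv_eq_sum {f : Rd d → ℝ} (h x : Rd d) : dv h f x = ∑ j, h j * pderiv1 j f x := by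
  have hh : h = ∑ j : Fin d, h j • EuclideanSpace.single j (1 : ℝ) := by
    ext l
    simp [Finset.sum_apply, Pi.single_apply]
  unfold dv pderiv1
  conv_lhs => rw [hh]
  simp [map_sum]

lemma tayl_dv {L : Rd d → ℝ} (hL : Sm L) (m : ℕ) (w h : Rd d) :
    tayl m (dv h L) w h = (m + 1) * tayl (m + 1) L w h := by
  have h1 : tayl m (dv h L) w h = ∑ j, ∑ k ∈ idx d m,
      (mfac k : ℝ)⁻¹ * mono k h * (h j * Dk (k + Pi.single j 1) L w) := by
    rw [Finset.sum_comm]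
    refine Finset.sum_congr rfl fun k _ => ?_
    rw [← dv_Dk hL, dv_eq_sum, Finset.mul_sum]
    refine Finset.sum_congr rfl fun j _ => ?_
    rw [pderiv1_Dk hL]
  have h2 : (m + 1) * tayl (m + 1) L w h = ∑ j, ∑ k ∈ idx d (m + 1),
      (k j : ℝ) * ((mfac k : ℝ)⁻¹ * mono k h * Dk k L w) := by
    rw [Finset.sum_comm, tayl, Finset.mul_sum]
    refine Finset.sum_congr rfl fun k hk => ?_
    rw [← Finset.sum_mul]
    congr 1
    rw [mem_idx, wt] at hk
    exact_mod_cast hk.symm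
  rw [h1, h2]
  refine Finset.sum_congr rfl fun j _ => ?_
  refine Finset.sum_of_injOn (fun k => k + Pi.single j 1) ?_ ?_ ?_ ?_
  · intro a _ b _ hab
    exact add_right_cancel hab
  · intro k hk
    have hk : wt k = m := mem_idx.1 hk
    exact mem_idx.2 (by rw [wt_add_single, hk])
  · intro k hk hk'
    have : k j = 0 := by
      by_contra hne
      apply hk'
      refine ⟨k - Pi.single j 1, ?_, ?_⟩
      · have e : k - Pi.single j 1 + Pi.single j 1 = k := by
          funext i
          by_cases hi : i = j
          · subst hi; simp; omega
          · simp [hi]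
        have := wt_add_single (k - Pi.single j 1) j
        rw [e] at this
        rw [Finset.mem_coe]
        rw [mem_idx] at hk ⊢
        omega
      · funext i
        by_cases hi : i = j
        · subst hi; simp; omega
        · simp [hi]
    simp [this]
  · intro k _
    simp only [mfac_add_single, mono_add_single]
    have := mfac_ne_zero k
    have h3 : ((k j : ℝ) + 1) ≠ 0 := by positivity
    simp only [Pi.add_apply, Pi.single_eq_same]
    push_cast
    field_simp

lemma tayl_zero (L : Rd d → ℝ) (w h : Rd d) : tayl 0 L w h = L w := by
  have : idx d 0 = {0} := by
    ext k
    rw [mem_idx, Finset.mem_singleton, wt, Finset.sum_eq_zero_iff]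
    simp [funext_iff]
  rw [tayl, this, Finset.sum_singleton, Dk_zero, mono_zero]
  simp [mfac]

/-- Taylor remainder along the segment `w + t h`: integrating `∂_h` of the remainder of order
`M` for `∂_h L` gives the remainder of order `M + 1` for `L`. -/
lemma taylor_bound_aux (M : ℕ) {L : Rd d → ℝ} (hL : Sm L) (w h : Rd d) (B : ℝ)
    (hB : ∀ u, |iteratedFDeriv ℝ M L u (fun _ => h)| ≤ B) (t : ℝ) (ht : t ∈ Icc (0 : ℝ) 1) :
    |L (w + t • h) - ∑ m ∈ Finset.range M, t ^ m * tayl m L w h| ≤ B := by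
  induction M generalizing L t with
  | zero => simpa using hB (w + t • h)
  | succ M ih =>
    have hB0 : 0 ≤ B := (abs_nonneg _).trans (hB 0)
    set ρ : ℝ → ℝ := fun t => L (w + t • h) - ∑ m ∈ Finset.range (M + 1), t ^ m * tayl m L w h
    set ρ' : ℝ → ℝ := fun t =>
      dv h L (w + t • h) - ∑ m ∈ Finset.range M, t ^ m * tayl m (dv h L) w h
    have hd : ∀ t, HasDerivAt ρ (ρ' t) t := by
      intro t
      have h1 : HasDerivAt (fun t : ℝ => L (w + t • h)) (dv h L (w + t • h)) t := by
        have hl : HasDerivAt (fun t : ℝ => w + t • h) h t := by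
          simpa using ((hasDerivAt_id t).smul_const h).const_add w
        exact (hL.diff (w + t • h)).hasFDerivAt.comp_hasDerivAt t hl
      have h2 : HasDerivAt (fun t : ℝ => ∑ m ∈ Finset.range (M + 1), t ^ m * tayl m L w h)
          (∑ m ∈ Finset.range (M + 1), ((m : ℝ) * t ^ (m - 1)) * tayl m L w h) t :=
        HasDerivAt.fun_sum fun m _ => (hasDerivAt_pow m t).mul_const _
      have h3 : ∑ m ∈ Finset.range (M + 1), ((m : ℝ) * t ^ (m - 1)) * tayl m L w h =
          ∑ m ∈ Finset.range M, t ^ m * tayl m (dv h L) w h := by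
        rw [Finset.sum_range_succ']
        simp only [Nat.cast_zero, zero_mul, add_zero]
        refine Finset.sum_congr rfl fun m _ => ?_
        rw [tayl_dv hL]
        simp only [Nat.add_sub_cancel]
        push_cast
        ring
      rw [h3] at h2
      exact h1.sub h2
    have hρ' : ∀ t ∈ Icc (0 : ℝ) 1, ‖ρ' t‖ ≤ B := by
      intro t ht
      refine ih (dv_smooth hL h) (fun u => ?_) t ht
      have := hB u
      rwa [iterD_succ hL] at this
    have h0 : ρ 0 = 0 := by
      simp only [ρ]
      rw [Finset.sum_range_succ']
      simp [tayl_zero]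
    have := norm_image_sub_le_of_norm_deriv_le_segment' (f := ρ) (f' := ρ') (a := 0) (b := 1)
      (C := B) (fun t _ => (hd t).hasDerivWithinAt)
      (fun t ht => hρ' t (Ico_subset_Icc_self ht)) t ht
    rw [h0, sub_zero, sub_zero] at this
    refine this.trans ?_
    nlinarith [ht.1, ht.2]

lemma taylor_bound (c : ℝ) {L : Rd d → ℝ} (hL : Sm L) (w h : Rd d) (B : ℝ)
    (hB : ∀ u, ‖iteratedFDeriv ℝ ⌈c⌉₊ L u‖ ≤ B) :
    |L (w + h) - ∑ k ∈ multiIdxLt d c, (mfac k : ℝ)⁻¹ * mono k h * Dk k L w| ≤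
      B * ‖h‖ ^ ⌈c⌉₊ := by
  have := taylor_bound_aux ⌈c⌉₊ hL w h (B * ‖h‖ ^ ⌈c⌉₊) (fun u => ?_) 1 (by simp)
  · rw [sum_multiIdxLt]
    simpa [tayl] using this
  · refine ((iteratedFDeriv ℝ ⌈c⌉₊ L u).le_opNorm _).trans ?_
    rw [Finset.prod_const, Finset.card_univ, Fintype.card_fin]
    exact mul_le_mul_of_nonneg_right (hB u) (by positivity)

end Taylor

/-! ### Convolution of a kernel with a test function -/

/-- `(K ⋆ ψ)(y) = ∫ K(z - y) ψ(z) dz`, so that testing `u` against `K ⋆ ψ` is testing the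
convolution of the kernel `K` with the distribution `u` against `ψ`. -/
def cv {d : ℕ} (K ψ : Rd d → ℝ) : Rd d → ℝ := fun y => ∫ z, K (z - y) * ψ z

section Convolution

variable {d : ℕ}

lemma IsTestFunction.sm {f : Rd d → ℝ} (hf : IsTestFunction f) : Sm f := hf.1

lemma IsTestFunction.dv {f : Rd d → ℝ} (hf : IsTestFunction f) (v : Rd d) :
    IsTestFunction (dv v f) := by
  refine ⟨dv_smooth hf.1 v, ?_⟩
  exact (hf.2.fderiv ℝ).comp_left (g := fun l : Rd d →L[ℝ] ℝ => l v) rfl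

lemma IsTestFunction.iterD {f : Rd d → ℝ} (hf : IsTestFunction f) (n : ℕ) (m : Fin n → Rd d) :
    IsTestFunction (fun x => iteratedFDeriv ℝ n f x m) := by
  refine ⟨iterD_apply_smooth hf.1 n m, ?_⟩
  exact (hf.2.iteratedFDeriv (𝕜 := ℝ) n).comp_left
    (g := fun l : ContinuousMultilinearMap ℝ (fun _ : Fin n => Rd d) ℝ => l m) rfl

lemma IsTestFunction.comp_neg {f : Rd d → ℝ} (hf : IsTestFunction f) :
    IsTestFunction (fun w => f (-w)) :=
  ⟨hf.1.comp contDiff_neg, hf.2.comp_homeomorph (Homeomorph.neg (Rd d))⟩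

lemma IsTestFunction.comp_sub_left {f : Rd d → ℝ} (hf : IsTestFunction f) (x : Rd d) :
    IsTestFunction (fun y => f (x - y)) :=
  ⟨hf.1.comp (contDiff_const.sub contDiff_id), hf.2.comp_homeomorph (Homeomorph.subLeft x)⟩

lemma IsTestFunction.integrable {f : Rd d → ℝ} (hf : IsTestFunction f) : Integrable f :=
  hf.1.continuous.integrable_of_hasCompactSupport hf.2

lemma integrable_cv {K ψ : Rd d → ℝ} (hK : Sm K) (hψ : IsTestFunction ψ) (y : Rd d) :
    Integrable (fun z => K (z - y) * ψ z) := by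
  refine Continuous.integrable_of_hasCompactSupport ?_ hψ.2.mul_left
  exact (hK.continuous.comp (by fun_prop)).mul hψ.1.continuous

lemma cv_eq_left (K ψ : Rd d → ℝ) :
    cv K ψ = convolution ψ (fun w => K (-w)) (ContinuousLinearMap.mul ℝ ℝ) volume := by
  funext y
  simp only [cv, convolution, ContinuousLinearMap.mul_apply', neg_sub]
  exact integral_congr_ae (.of_forall fun z => mul_comm _ _)

lemma cv_eq_right (K ψ : Rd d → ℝ) :
    cv K ψ = convolution (fun w => K (-w)) ψ (ContinuousLinearMap.mul ℝ ℝ) volume := by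
  funext y
  simp only [cv, convolution, ContinuousLinearMap.mul_apply']
  rw [← integral_sub_left_eq_self _ _ y]
  refine integral_congr_ae (.of_forall fun z => ?_)
  simp

lemma cv_smooth {K ψ : Rd d → ℝ} (hK : IsTestFunction K) (hψ : IsTestFunction ψ) :
    Sm (cv K ψ) := by
  rw [cv_eq_right]
  exact hψ.2.contDiff_convolution_right _ hK.comp_neg.1.continuous.locallyIntegrable hψ.1

lemma dv_cv_right {K ψ : Rd d → ℝ} (hK : IsTestFunction K) (hψ : IsTestFunction ψ) (v : Rd d) :
    dv v (cv K ψ) = cv K (dv v ψ) := by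
  funext y
  have h := hψ.2.hasFDerivAt_convolution_right (ContinuousLinearMap.mul ℝ ℝ) (μ := volume)
    hK.comp_neg.1.continuous.locallyIntegrable (hψ.1.of_le (by simp)) y
  rw [← cv_eq_right] at h
  rw [dv, h.fderiv, cv_eq_right]
  exact convolution_precompR_apply _ hK.comp_neg.1.continuous.locallyIntegrable
    (hψ.2.fderiv ℝ) hψ.sm.fd.continuous y v

lemma dv_comp_neg {K : Rd d → ℝ} (hK : Sm K) (v : Rd d) :
    dv v (fun w => K (-w)) = fun w => -dv v K (-w) := by
  funext w
  have h : HasFDerivAt (fun w => K (-w)) ((fderiv ℝ K (-w)).comp (-ContinuousLinearMap.id ℝ _)) w :=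
    (hK.diff (-w)).hasFDerivAt.comp w (hasFDerivAt_id w).neg
  simp [dv, h.fderiv]

lemma dv_comp_sub {K : Rd d → ℝ} (hK : Sm K) (x v : Rd d) :
    dv v (fun w => K (x - w)) = fun w => -dv v K (x - w) := by
  funext w
  have h : HasFDerivAt (fun w => K (x - w))
      ((fderiv ℝ K (x - w)).comp (-ContinuousLinearMap.id ℝ _)) w :=
    (hK.diff (x - w)).hasFDerivAt.comp w ((hasFDerivAt_id w).const_sub x)
  simp [dv, h.fderiv]

lemma dv_cv_left {K ψ : Rd d → ℝ} (hK : IsTestFunction K) (hψ : IsTestFunction ψ) (v : Rd d) :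
    dv v (cv K ψ) = fun y => -cv (dv v K) ψ y := by
  funext y
  have h := hK.comp_neg.2.hasFDerivAt_convolution_right (ContinuousLinearMap.mul ℝ ℝ)
    (μ := volume) hψ.1.continuous.locallyIntegrable (hK.comp_neg.1.of_le (by simp)) y
  rw [← cv_eq_left] at h
  rw [dv, h.fderiv]
  rw [convolution_precompR_apply _ hψ.1.continuous.locallyIntegrable
    (hK.comp_neg.2.fderiv ℝ) hK.comp_neg.sm.fd.continuous y v]
  change convolution ψ (dv v (fun w => K (-w))) _ _ y = _
  rw [dv_comp_neg hK.1, cv_eq_left]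
  simp [convolution, integral_neg]

lemma iterD_cv_right (n : ℕ) {K ψ : Rd d → ℝ} (hK : IsTestFunction K) (hψ : IsTestFunction ψ)
    (y : Rd d) (m : Fin n → Rd d) :
    iteratedFDeriv ℝ n (cv K ψ) y m = cv K (fun z => iteratedFDeriv ℝ n ψ z m) y := by
  induction n generalizing ψ with
  | zero => simp
  | succ n ih =>
    rw [iterD_succ (cv_smooth hK hψ), dv_cv_right hK hψ, ih (hψ.dv _)]
    simp_rw [iterD_succ hψ.1]

lemma cv_support {K ψ : Rd d → ℝ} {x : Rd d} {a b : ℝ} (hK : tsupport K ⊆ closedBall 0 a)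
    (hψ : tsupport ψ ⊆ closedBall x b) : tsupport (cv K ψ) ⊆ closedBall x (a + b) := by
  refine closure_minimal ?_ isClosed_closedBall
  intro y hy
  by_contra hc
  apply hy
  refine integral_eq_zero_of_ae (.of_forall fun z => ?_)
  by_contra hz
  have h1 : K (z - y) ≠ 0 := left_ne_zero_of_mul hz
  have h2 : ψ z ≠ 0 := right_ne_zero_of_mul hz
  have h1' := hK (subset_tsupport _ h1)
  have h2' := hψ (subset_tsupport _ h2)
  rw [mem_closedBall, dist_zero_right] at h1'
  rw [mem_closedBall, dist_eq_norm] at h2'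
  apply hc
  rw [mem_closedBall, dist_eq_norm]
  calc ‖y - x‖ = ‖-(z - y) + (z - x)‖ := by congr 1; abel
    _ ≤ ‖z - y‖ + ‖z - x‖ := by rw [← norm_neg (z - y)]; exact norm_add_le _ _
    _ ≤ a + b := add_le_add h1' h2'

lemma cv_test {K ψ : Rd d → ℝ} (hK : IsTestFunction K) (hψ : IsTestFunction ψ) :
    IsTestFunction (cv K ψ) := by
  refine ⟨cv_smooth hK hψ, ?_⟩
  obtain ⟨a, ha⟩ := hK.2.isCompact.isBounded.subset_closedBall 0
  obtain ⟨b, hb⟩ := hψ.2.isCompact.isBounded.subset_closedBall 0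
  exact (isCompact_closedBall (0 : Rd d) (a + b)).of_isClosed_subset (isClosed_tsupport _)
    (cv_support ha hb)

lemma abs_cv_le {K ψ : Rd d → ℝ} (hK : IsTestFunction K) {B : ℝ} (hψ : ∀ z, |ψ z| ≤ B)
    (y : Rd d) : |cv K ψ y| ≤ (∫ z, |K z|) * B := by
  have h : ∫ z, |K z| = ∫ z, |K (z - y)| := (integral_sub_right_eq_self (fun z => |K z|) y).symm
  rw [h, ← integral_mul_const, cv, ← Real.norm_eq_abs]
  refine norm_integral_le_of_norm_le ?_ (.of_forall fun z => ?_)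
  · exact ((hK.integrable.comp_sub_right y).abs).mul_const _
  · rw [norm_mul, Real.norm_eq_abs, Real.norm_eq_abs]
    exact mul_le_mul_of_nonneg_left (hψ z) (abs_nonneg _)

lemma norm_iterD_cv_le (n : ℕ) {K ψ : Rd d → ℝ} (hK : IsTestFunction K) (hψ : IsTestFunction ψ)
    {B : ℝ} (hB : ∀ z, ‖iteratedFDeriv ℝ n ψ z‖ ≤ B) (y : Rd d) :
    ‖iteratedFDeriv ℝ n (cv K ψ) y‖ ≤ (∫ z, |K z|) * B := by
  have hB0 : 0 ≤ B := (norm_nonneg _).trans (hB 0)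
  have hI : 0 ≤ ∫ z, |K z| := integral_nonneg fun _ => abs_nonneg _
  apply ContinuousMultilinearMap.opNorm_le_bound (by positivity)
  intro m
  rw [iterD_cv_right n hK hψ, mul_assoc]
  refine abs_cv_le hK (fun z => ?_) y
  refine ((iteratedFDeriv ℝ n ψ z).le_opNorm m).trans ?_
  exact mul_le_mul_of_nonneg_right (hB z) (Finset.prod_nonneg fun _ _ => norm_nonneg _)

lemma cv_add {K ψ₁ ψ₂ : Rd d → ℝ} (hK : Sm K) (h₁ : IsTestFunction ψ₁)
    (h₂ : IsTestFunction ψ₂) : cv K (ψ₁ + ψ₂) = cv K ψ₁ + cv K ψ₂ := by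
  funext y
  simp only [cv, Pi.add_apply, mul_add]
  exact integral_add (integrable_cv hK h₁ y) (integrable_cv hK h₂ y)

lemma cv_smul (K ψ : Rd d → ℝ) (c : ℝ) : cv K (c • ψ) = c • cv K ψ := by
  funext y
  simp only [cv, Pi.smul_apply, smul_eq_mul]
  rw [← integral_const_mul]
  exact integral_congr_ae (.of_forall fun z => by simp only; ring)

/-- The test function obtained from `K ⋆ ψ` by replacing `K(z - ·)` with the remainder of its
Taylor expansion of order `c` at `z = x`. -/
def tg (c : ℝ) (x : Rd d) (K ψ : Rd d → ℝ) : Rd d → ℝ := fun y =>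
  cv K ψ y - ∑ k ∈ multiIdxLt d c, ((mfac k : ℝ)⁻¹ * ∫ z, mono k (z - x) * ψ z) * Dk k K (x - y)

lemma Dk_test {f : Rd d → ℝ} (hf : IsTestFunction f) (k : Fin d → ℕ) :
    IsTestFunction (Dk k f) := by
  rw [Dk_eq_DL]
  generalize List.finRange d = L
  induction L with
  | nil => exact hf
  | cons a L ih =>
    change IsTestFunction (pderivPow a (k a) (DL L k f))
    generalize k a = n
    induction n with
    | zero => exact ih
    | succ n ihn => exact ihn.dv _

lemma tsupport_dv_subset (f : Rd d → ℝ) (v : Rd d) : tsupport (dv v f) ⊆ tsupport f := by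
  refine closure_minimal ?_ (isClosed_tsupport f)
  intro x hx
  apply support_fderiv_subset ℝ
  intro h
  apply hx
  simp [dv, h]

lemma tsupport_Dk_subset (f : Rd d → ℝ) (k : Fin d → ℕ) : tsupport (Dk k f) ⊆ tsupport f := by
  rw [Dk_eq_DL]
  generalize List.finRange d = L
  induction L with
  | nil => exact subset_rfl
  | cons a L ih =>
    change tsupport (pderivPow a (k a) (DL L k f)) ⊆ _
    generalize k a = n
    induction n with
    | zero => exact ih
    | succ n ihn => exact (tsupport_dv_subset _ _).trans ihn

lemma tsupport_comp_sub_subset {f : Rd d → ℝ} {a : ℝ} (h : tsupport f ⊆ closedBall 0 a)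
    (x : Rd d) : tsupport (fun y => f (x - y)) ⊆ closedBall x a := by
  refine closure_minimal ?_ isClosed_closedBall
  intro y hy
  have := h (subset_tsupport _ hy)
  rwa [mem_closedBall, dist_zero_right, ← dist_eq_norm, dist_comm] at this

lemma tg_test (c : ℝ) (x : Rd d) {K ψ : Rd d → ℝ} (hK : IsTestFunction K)
    (hψ : IsTestFunction ψ) : Sm (tg c x K ψ) := by
  refine (cv_smooth hK hψ).sub (ContDiff.sum fun k _ => contDiff_const.mul ?_)
  exact ((Dk_test hK k).comp_sub_left x).1

lemma dv_tg (c : ℝ) (x : Rd d) {K ψ : Rd d → ℝ} (hK : IsTestFunction K)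
    (hψ : IsTestFunction ψ) (v : Rd d) : dv v (tg c x K ψ) = fun y => -tg c x (dv v K) ψ y := by
  funext y
  have h1 := ((cv_smooth hK hψ).diff y).hasFDerivAt
  have h2 : ∀ k : Fin d → ℕ, HasFDerivAt (fun y => Dk k K (x - y))
      (fderiv ℝ (fun y => Dk k K (x - y)) y) y := fun k =>
    (((Dk_test hK k).comp_sub_left x).sm.diff y).hasFDerivAt
  have h3 := (h1.sub (HasFDerivAt.fun_sum (u := multiIdxLt d c) fun k _ =>
    (h2 k).const_mul ((mfac k : ℝ)⁻¹ * ∫ z, mono k (z - x) * ψ z))).fderiv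
  have h4 : ∀ k : Fin d → ℕ, fderiv ℝ (fun y => Dk k K (x - y)) y v = - Dk k (dv v K) (x - y) := by
    intro k
    have := congrFun (dv_comp_sub (Dk_smooth hK.1 k) x v) y
    rw [dv_Dk hK.1] at this
    exact this
  have h5 : fderiv ℝ (cv K ψ) y v = - cv (dv v K) ψ y := congrFun (dv_cv_left hK hψ v) y
  change fderiv ℝ (tg c x K ψ) y v = _
  have h6 : fderiv ℝ (tg c x K ψ) y = _ := h3
  rw [h6]
  simp [h4, h5, tg, Finset.sum_neg_distrib]
  ring

lemma iterD_tg (n : ℕ) (c : ℝ) (x : Rd d) {K ψ : Rd d → ℝ} (hK : IsTestFunction K)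
    (hψ : IsTestFunction ψ) (y : Rd d) (m : Fin n → Rd d) :
    |iteratedFDeriv ℝ n (tg c x K ψ) y m| =
      |tg c x (fun z => iteratedFDeriv ℝ n K z m) ψ y| := by
  induction n generalizing K with
  | zero => simp
  | succ n ih =>
    rw [iterD_succ (tg_test c x hK hψ), dv_tg c x hK hψ]
    simp_rw [iterD_succ hK.1]
    rw [← ih (hK.dv _)]
    have : (fun y => -tg c x (dv (m (Fin.last n)) K) ψ y) = -tg c x (dv (m (Fin.last n)) K) ψ := rfl
    rw [this, iteratedFDeriv_neg_apply]
    simp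

lemma abs_tg_le (c : ℝ) (x : Rd d) {L ψ : Rd d → ℝ} (hL : IsTestFunction L)
    (hψ : IsTestFunction ψ) {l B : ℝ} (hsupp : tsupport ψ ⊆ closedBall x l)
    (hB : ∀ u, ‖iteratedFDeriv ℝ ⌈c⌉₊ L u‖ ≤ B) (y : Rd d) :
    |tg c x L ψ y| ≤ (∫ z, |ψ z|) * (B * l ^ ⌈c⌉₊) := by
  have hB0 : 0 ≤ B := (norm_nonneg _).trans (hB 0)
  have hint : ∀ k : Fin d → ℕ, Integrable (fun z => mono k (z - x) * ψ z) := fun k => by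
    refine Continuous.integrable_of_hasCompactSupport ?_ hψ.2.mul_left
    exact ((continuous_mono k).comp (by fun_prop)).mul hψ.1.continuous
  have h1 : tg c x L ψ y = ∫ z, (L ((x - y) + (z - x)) -
      ∑ k ∈ multiIdxLt d c, (mfac k : ℝ)⁻¹ * mono k (z - x) * Dk k L (x - y)) * ψ z := by
    have h2 : ∀ z, (L ((x - y) + (z - x)) -
      ∑ k ∈ multiIdxLt d c, (mfac k : ℝ)⁻¹ * mono k (z - x) * Dk k L (x - y)) * ψ z =
        L (z - y) * ψ z - ∑ k ∈ multiIdxLt d c,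
          ((mfac k : ℝ)⁻¹ * Dk k L (x - y)) * (mono k (z - x) * ψ z) := by
      intro z
      have : (x - y) + (z - x) = z - y := by abel
      rw [this, sub_mul, Finset.sum_mul]
      congr 1
      exact Finset.sum_congr rfl fun k _ => by ring
    simp_rw [h2]
    rw [integral_sub (integrable_cv hL.1 hψ y)
      (integrable_finsetSum _ fun k _ => (hint k).const_mul _),
      integral_finsetSum _ fun k _ => (hint k).const_mul _, tg, cv]
    congr 1
    refine Finset.sum_congr rfl fun k _ => ?_
    rw [integral_const_mul]
    ring
  rw [h1, ← integral_mul_const, ← Real.norm_eq_abs]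
  refine norm_integral_le_of_norm_le (hψ.integrable.abs.mul_const _) (.of_forall fun z => ?_)
  rw [norm_mul, mul_comm, Real.norm_eq_abs, Real.norm_eq_abs]
  by_cases hz : ψ z = 0
  · simp [hz]
  have hz' := hsupp (subset_tsupport _ hz)
  rw [mem_closedBall, dist_eq_norm] at hz'
  refine mul_le_mul_of_nonneg_left ?_ (abs_nonneg _)
  refine (taylor_bound c hL.1 _ _ B hB).trans ?_
  gcongr

/-- Derivatives of the Taylor remainder test function gain the factor `l ^ ⌈c⌉`. -/
lemma norm_iterD_tg_le (n : ℕ) (c : ℝ) (x : Rd d) {K ψ : Rd d → ℝ} (hK : IsTestFunction K)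
    (hψ : IsTestFunction ψ) {l B : ℝ} (hl : 0 ≤ l) (hsupp : tsupport ψ ⊆ closedBall x l)
    (hB : ∀ u, ‖iteratedFDeriv ℝ (⌈c⌉₊ + n) K u‖ ≤ B) (y : Rd d) :
    ‖iteratedFDeriv ℝ n (tg c x K ψ) y‖ ≤ (∫ z, |ψ z|) * (B * l ^ ⌈c⌉₊) := by
  have hB0 : 0 ≤ B := (norm_nonneg _).trans (hB 0)
  have hI : 0 ≤ ∫ z, |ψ z| := integral_nonneg fun _ => abs_nonneg _
  apply ContinuousMultilinearMap.opNorm_le_bound (by positivity)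
  intro m
  rw [Real.norm_eq_abs, iterD_tg n c x hK hψ]
  have := abs_tg_le c x (hK.iterD n m) hψ hsupp (B := (∏ i, ‖m i‖) * B) (fun u => ?_) y
  · refine this.trans (le_of_eq ?_)
    ring
  · refine (norm_iterD_iterD_le hK.1 _ n m u).trans ?_
    exact mul_le_mul_of_nonneg_left (hB u) (Finset.prod_nonneg fun _ _ => norm_nonneg _)

lemma tg_support (c : ℝ) (x : Rd d) {K ψ : Rd d → ℝ} {a b : ℝ} (hb : 0 ≤ b)
    (hK : tsupport K ⊆ closedBall 0 a)
    (hψ : tsupport ψ ⊆ closedBall x b) : tsupport (tg c x K ψ) ⊆ closedBall x (a + b) := by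
  refine closure_minimal ?_ isClosed_closedBall
  intro y hy
  by_contra hc
  apply hy
  have h1 : cv K ψ y = 0 := by
    by_contra h
    exact hc (cv_support hK hψ (subset_tsupport _ h))
  have h2 : ∀ k, Dk k K (x - y) = 0 := by
    intro k
    by_contra h
    apply hc
    have := tsupport_comp_sub_subset ((tsupport_Dk_subset K k).trans hK) x
      (subset_tsupport (fun y => Dk k K (x - y)) h)
    exact closedBall_subset_closedBall (by linarith) this
  simp [tg, h1, h2]

end Convolution

/-! ### Rescaled test functions and dyadic sums -/

section Scaling

variable {d : ℕ}

/-- The dyadic scale `2⁻ⁿ`. -/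
def ep (n : ℕ) : ℝ := (2 : ℝ)⁻¹ ^ n

lemma ep_pos (n : ℕ) : 0 < ep n := by unfold ep; positivity

lemma ep_le_one (n : ℕ) : ep n ≤ 1 := pow_le_one₀ (by norm_num) (by norm_num)

lemma summable_ep_rpow {q : ℝ} (hq : 0 < q) : Summable fun n => ep n ^ q := by
  have h : ∀ n, ep n ^ q = ((2 : ℝ)⁻¹ ^ q) ^ n := by
    intro n
    rw [ep, ← Real.rpow_natCast, ← Real.rpow_mul (by norm_num), mul_comm,
      Real.rpow_mul (by norm_num), Real.rpow_natCast]
  simp_rw [h]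
  exact summable_geometric_of_lt_one (by positivity)
    (Real.rpow_lt_one (by norm_num) (by norm_num) hq)

lemma summable_int_pow {ρ : ℝ} (h0 : 0 ≤ ρ) (h1 : ρ < 1) :
    Summable fun z : ℤ => ρ ^ z.natAbs := by
  refine Summable.of_nat_of_neg ?_ ?_ <;>
  simpa using summable_geometric_of_lt_one h0 h1

/-- The two-sided geometric sum over dyadic scales around `l` is bounded uniformly in `l`. -/
lemma exists_dyadic_sum {q : ℝ} (hq : 0 < q) : ∃ S : ℝ, 0 ≤ S ∧ ∀ l : ℝ, 0 < l → l ≤ 1 →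
    Summable (fun n => (min (ep n / l) (l / ep n)) ^ q) ∧
    ∑' n, (min (ep n / l) (l / ep n)) ^ q ≤ S := by
  set ρ : ℝ := (2 : ℝ)⁻¹ ^ q
  have hρ0 : 0 ≤ ρ := by positivity
  have hρ1 : ρ < 1 := Real.rpow_lt_one (by norm_num) (by norm_num) hq
  have hs := (summable_int_pow hρ0 hρ1).mul_left ((2 : ℝ) ^ q)
  have hnn : ∀ z : ℤ, 0 ≤ (2 : ℝ) ^ q * ρ ^ z.natAbs := fun z => by positivity
  refine ⟨∑' z : ℤ, (2 : ℝ) ^ q * ρ ^ z.natAbs, tsum_nonneg hnn, fun l hl hl1 => ?_⟩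
  obtain ⟨m, hm1, hm2⟩ := exists_nat_pow_near_of_lt_one hl hl1
    (y := (2 : ℝ)⁻¹) (by norm_num) (by norm_num)
  have hinj : Function.Injective (fun n : ℕ => (n : ℤ) - m) := fun a b h => by
    have : (a : ℤ) - m = b - m := h
    omega
  have hs' : Summable fun n : ℕ => (2 : ℝ) ^ q * ρ ^ ((n : ℤ) - m).natAbs :=
    hs.comp_injective hinj
  have hmin : ∀ n, 0 ≤ min (ep n / l) (l / ep n) := fun n =>
    le_min (div_nonneg (ep_pos n).le hl.le) (div_nonneg hl.le (ep_pos n).le)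
  have hle : ∀ n : ℕ, (min (ep n / l) (l / ep n)) ^ q ≤
      (2 : ℝ) ^ q * ρ ^ ((n : ℤ) - m).natAbs := by
    intro n
    have key : min (ep n / l) (l / ep n) ≤ 2 * (2 : ℝ)⁻¹ ^ ((n : ℤ) - m).natAbs := by
      rcases le_total m n with hmn | hmn
      · refine (min_le_left _ _).trans ?_
        have e : ((n : ℤ) - m).natAbs = n - m := by omega
        rw [e, div_le_iff₀ hl]
        have : ep n = 2 * (2 : ℝ)⁻¹ ^ (n - m) * (2 : ℝ)⁻¹ ^ (m + 1) := by
          have : n = (n - m) + m := by omega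
          conv_lhs => rw [ep, this, pow_add]
          rw [pow_succ]; ring
        rw [this]
        exact mul_le_mul_of_nonneg_left hm1.le (by positivity)
      · refine (min_le_right _ _).trans ?_
        have e : ((n : ℤ) - m).natAbs = m - n := by omega
        rw [e, div_le_iff₀ (ep_pos n)]
        have : (2 : ℝ)⁻¹ ^ (m - n) * ep n = (2 : ℝ)⁻¹ ^ m := by
          rw [ep, ← pow_add]; congr 1; omega
        rw [mul_assoc, this]
        have : 0 < (2 : ℝ)⁻¹ ^ m := by positivity
        linarith
    refine (Real.rpow_le_rpow (hmin n) key hq.le).trans (le_of_eq ?_)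
    rw [Real.mul_rpow (by norm_num) (by positivity)]
    congr 1
    rw [← Real.rpow_natCast, ← Real.rpow_mul (by norm_num), mul_comm,
      Real.rpow_mul (by norm_num), Real.rpow_natCast]
  have hsum := Summable.of_nonneg_of_le (fun n => Real.rpow_nonneg (hmin n) q) hle hs'
  refine ⟨hsum, (hsum.tsum_le_tsum hle hs').trans ?_⟩
  exact tsum_comp_le_tsum_of_inj hs hnn hinj

lemma norm_iterD_affine {g : Rd d → ℝ} (hg : Sm g) (c a : ℝ) (x : Rd d) (n : ℕ) (z : Rd d) :
    ‖iteratedFDeriv ℝ n (fun z => c * g (x + a • z)) z‖ =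
      |c| * |a| ^ n * ‖iteratedFDeriv ℝ n g (x + a • z)‖ := by
  have hg' : Sm (fun z => g (x + z)) := hg.comp (contDiff_const.add contDiff_id)
  have hg'' : Sm (fun z => g (x + a • z)) := hg'.comp (contDiff_const_smul a)
  have h1 : (fun z => c * g (x + a • z)) = c • (fun z => g (x + a • z)) := rfl
  rw [h1, iteratedFDeriv_const_smul_apply (hg''.nat n).contDiffAt, norm_smul,
    iteratedFDeriv_comp_const_smul (f := fun z => g (x + z)) a (hg'.nat n), norm_smul,
    iteratedFDeriv_comp_add_left]
  simp [mul_assoc]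

lemma scal_eq_affine (φ : Rd d → ℝ) (x : Rd d) (l : ℝ) :
    scal φ x l = fun y => (l ^ d)⁻¹ * φ (-(l⁻¹ • x) + l⁻¹ • y) := by
  funext y
  simp only [scal]
  rw [smul_sub]
  congr 2
  abel

lemma scal_support {φ : Rd d → ℝ} (hφ : tsupport φ ⊆ closedBall 0 1) (x : Rd d) {l : ℝ}
    (hl : 0 < l) : tsupport (scal φ x l) ⊆ closedBall x l := by
  refine closure_minimal ?_ isClosed_closedBall
  intro y hy
  have h := hφ (subset_tsupport _ (right_ne_zero_of_mul hy))
  rw [mem_closedBall, dist_zero_right, norm_smul, Real.norm_eq_abs,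
    abs_of_pos (inv_pos.2 hl), inv_mul_le_iff₀ hl, mul_one] at h
  rwa [mem_closedBall, dist_eq_norm]

lemma scal_test {φ : Rd d → ℝ} (hφ : Sm φ) (hs : tsupport φ ⊆ closedBall 0 1) (x : Rd d) {l : ℝ}
    (hl : 0 < l) : IsTestFunction (scal φ x l) := by
  refine ⟨?_, (isCompact_closedBall x l).of_isClosed_subset (isClosed_tsupport _)
    (scal_support hs x hl)⟩
  rw [scal_eq_affine]
  exact contDiff_const.mul (hφ.comp (contDiff_const.add (contDiff_const_smul _)))

lemma norm_iterD_scal {φ : Rd d → ℝ} (hφ : Sm φ) (x : Rd d) {l : ℝ} (hl : 0 < l) (n : ℕ)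
    {B : ℝ} (hB : ∀ y, ‖iteratedFDeriv ℝ n φ y‖ ≤ B) (y : Rd d) :
    ‖iteratedFDeriv ℝ n (scal φ x l) y‖ ≤ B / l ^ (d + n) := by
  rw [scal_eq_affine, norm_iterD_affine hφ, abs_of_pos (by positivity), abs_of_pos (by positivity)]
  rw [pow_add, inv_pow, ← mul_inv, div_eq_inv_mul]
  exact mul_le_mul_of_nonneg_left (hB _) (by positivity)

/-- A test function supported in the ball of radius `l` about `x` whose derivatives scale like
`l^{-d-i}` is, up to a constant, a rescaled element of `B_r`. -/
lemma apply_le_of_scale {r : ℕ} {x : Rd d} {u : (Rd d → ℝ) →ₗ[ℝ] ℝ} {D : ℝ} {l : ℝ}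
    (hl : 0 < l) (hu : ∀ φ ∈ Br d r, Sm φ → |u (scal φ x l)| ≤ D)
    {g : Rd d → ℝ} (hg : Sm g) (hsupp : tsupport g ⊆ closedBall x l) {B : ℝ} (hB : 0 < B)
    (hbd : ∀ i ≤ r, ∀ y, ‖iteratedFDeriv ℝ i g y‖ * l ^ (d + i) ≤ B) :
    |u g| ≤ D * B := by
  set φ : Rd d → ℝ := fun z => (B⁻¹ * l ^ d) * g (x + l • z)
  have hφs : Sm φ := contDiff_const.mul (hg.comp (contDiff_const.add (contDiff_const_smul _)))
  have hφ : φ ∈ Br d r := by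
    refine ⟨hφs.nat r, ?_, fun i hi z => ?_⟩
    · refine closure_minimal ?_ isClosed_closedBall
      intro z hz
      have h := hsupp (subset_tsupport _ (right_ne_zero_of_mul hz))
      rw [mem_closedBall, dist_eq_norm, add_sub_cancel_left, norm_smul, Real.norm_eq_abs,
        abs_of_pos hl] at h
      rw [mem_closedBall, dist_zero_right]
      exact le_of_mul_le_mul_left (by linarith) hl
    · rw [norm_iterD_affine hg, abs_of_pos (by positivity), abs_of_pos hl]
      have := hbd i hi (x + l • z)
      rw [pow_add] at this
      calc _ = B⁻¹ * (‖iteratedFDeriv ℝ i g (x + l • z)‖ * (l ^ d * l ^ i)) := by ring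
        _ ≤ B⁻¹ * B := mul_le_mul_of_nonneg_left this (by positivity)
        _ = 1 := inv_mul_cancel₀ hB.ne'
  have hgφ : g = B • scal φ x l := by
    funext y
    simp only [Pi.smul_apply, smul_eq_mul, scal, φ]
    rw [smul_smul, mul_inv_cancel₀ hl.ne', one_smul, add_sub_cancel]
    field_simp
  rw [hgφ, map_smul, smul_eq_mul, abs_mul, abs_of_pos hB, mul_comm]
  exact mul_le_mul_of_nonneg_right (hu φ hφ hφs) hB.le

/-- The volume of the unit ball, as a real number. -/
def vol1 (d : ℕ) : ℝ := (volume (closedBall (0 : Rd d) 1)).toReal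

lemma vol1_pos (d : ℕ) : 0 < vol1 d := by
  refine ENNReal.toReal_pos ?_ (measure_closedBall_lt_top).ne
  exact (measure_closedBall_pos volume _ one_pos).ne'

lemma integral_abs_le {h : Rd d → ℝ} {x : Rd d} {l A : ℝ}
    (hl : 0 < l) (hs : tsupport h ⊆ closedBall x l) (hA : ∀ y, |h y| ≤ A) :
    ∫ y, |h y| ≤ A * (l ^ d * vol1 d) := by
  have h1 : ∫ y, |h y| = ∫ y in closedBall x l, |h y| := by
    rw [setIntegral_eq_integral_of_forall_compl_eq_zero]
    intro y hy
    rw [image_eq_zero_of_notMem_tsupport fun h' => hy (hs h'), abs_zero]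
  have h2 := norm_setIntegral_le_of_norm_le_const (μ := volume) (s := closedBall x l)
    (f := fun y => |h y|) (C := A) measure_closedBall_lt_top (fun y _ => by simpa using hA y)
  rw [← h1] at h2
  refine (le_abs_self _).trans (h2.trans (le_of_eq ?_))
  rw [Measure.real, Measure.addHaar_closedBall' _ _ hl.le, ENNReal.toReal_mul,
    ENNReal.toReal_ofReal (by positivity), finrank_euclideanSpace, Fintype.card_fin, vol1]

lemma abs_integral_mono_le {ψ : Rd d → ℝ} (hψ : IsTestFunction ψ) {x : Rd d} {l A : ℝ}
    (hl : 0 < l) (hs : tsupport ψ ⊆ closedBall x l) (hA : ∫ y, |ψ y| ≤ A) (k : Fin d → ℕ) :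
    |∫ z, mono k (z - x) * ψ z| ≤ A * l ^ wt k := by
  have h1 : |∫ z, mono k (z - x) * ψ z| ≤ ∫ z, |ψ z| * l ^ wt k := by
    rw [← Real.norm_eq_abs]
    refine norm_integral_le_of_norm_le (hψ.integrable.abs.mul_const _) (.of_forall fun z => ?_)
    rw [norm_mul, mul_comm, Real.norm_eq_abs, Real.norm_eq_abs]
    by_cases hz : ψ z = 0
    · simp [hz]
    have hz' := hs (subset_tsupport _ hz)
    rw [mem_closedBall, dist_eq_norm] at hz'
    refine mul_le_mul_of_nonneg_left ?_ (abs_nonneg _)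
    exact (abs_mono_le _ _).trans (pow_le_pow_left₀ (norm_nonneg _) hz' _)
  rw [integral_mul_const] at h1
  exact h1.trans (mul_le_mul_of_nonneg_right hA (by positivity))

end Scaling

/-! ### The scale-by-scale estimate -/

section Scales

variable {d : ℕ}

/-- Quantitative form of the assumptions on the kernel decomposition `K = Σ_n K_n`: each `K_n`
lives at scale `2⁻ⁿ`, and its derivatives up to order `m` scale accordingly. -/
structure KerBd (d : ℕ) (β A : ℝ) (m : ℕ) (K : ℕ → Rd d → ℝ) : Prop where
  pos : 0 < A
  test : ∀ n, IsTestFunction (K n)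
  supp : ∀ n, tsupport (K n) ⊆ closedBall 0 (ep n)
  bd : ∀ n, ∀ q ≤ m, ∀ y, ‖iteratedFDeriv ℝ q (K n) y‖ * ep n ^ (d + q) ≤ A * ep n ^ β

lemma KerBd.integral_le {β A : ℝ} {m : ℕ} {K : ℕ → Rd d → ℝ} (h : KerBd d β A m K) (n : ℕ) :
    ∫ y, |K n y| ≤ A * ep n ^ β * vol1 d := by
  have he := ep_pos n
  have := integral_abs_le he (h.supp n) (A := A * ep n ^ β / ep n ^ d) fun y => by
    have := h.bd n 0 (Nat.zero_le _) y
    rw [norm_iteratedFDeriv_zero, Real.norm_eq_abs] at this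
    rw [le_div_iff₀ (by positivity)]; simpa using this
  refine this.trans (le_of_eq ?_)
  field_simp

/-- The data on a test function at scale `l` about `x` used by the estimates below. -/
structure TestAt (r : ℕ) (x : Rd d) (l : ℝ) (ψ : Rd d → ℝ) : Prop where
  test : IsTestFunction ψ
  supp : tsupport ψ ⊆ closedBall x l
  bd : ∀ i ≤ r, ∀ y, ‖iteratedFDeriv ℝ i ψ y‖ ≤ 1 / l ^ (d + i)
  int : ∫ y, |ψ y| ≤ vol1 d

lemma testAt_scal {r : ℕ} {φ : Rd d → ℝ} (hφ : φ ∈ Br d r) (hs : Sm φ) (x : Rd d) {l : ℝ}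
    (hl : 0 < l) : TestAt r x l (scal φ x l) := by
  have h2 : ∀ i ≤ r, ∀ y, ‖iteratedFDeriv ℝ i (scal φ x l) y‖ ≤ 1 / l ^ (d + i) :=
    fun i hi y => norm_iterD_scal hs x hl i (hφ.2.2 i hi) y
  refine ⟨scal_test hs hφ.2.1 x hl, scal_support hφ.2.1 x hl, h2, ?_⟩
  refine (integral_abs_le hl (scal_support hφ.2.1 x hl) (A := 1 / l ^ d) fun y => ?_).trans
    (le_of_eq (by field_simp))
  have := h2 0 (Nat.zero_le _) y
  simpa using this

/-- `u` is of order `l ^ γ` at the point `x`, tested at all scales `l ≤ 1`. -/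
def SmallAt (r : ℕ) (C γ : ℝ) (x : Rd d) (u : (Rd d → ℝ) →ₗ[ℝ] ℝ) : Prop :=
  ∀ φ ∈ Br d r, Sm φ → ∀ l : ℝ, 0 < l → l ≤ 1 → |u (scal φ x l)| ≤ C * l ^ γ

variable {r m : ℕ} {β A C γ : ℝ} {K : ℕ → Rd d → ℝ} {x : Rd d} {u : (Rd d → ℝ) →ₗ[ℝ] ℝ}

/-- The Taylor coefficients at scale `2⁻ⁿ`: `D^k K_n (x - ·)` is a test function at scale `2⁻ⁿ`
about `x`, of size `2^{-n(β - |k|)}`. -/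
lemma bound_Dk (hK : KerBd d β A m K) (hu : SmallAt r C γ x u) (n : ℕ) (k : Fin d → ℕ)
    (hk : wt k + r ≤ m) :
    |u (fun y => Dk k (K n) (x - y))| ≤ C * ep n ^ γ * (A * ep n ^ β / ep n ^ wt k) := by
  have he := ep_pos n
  have hA := hK.pos
  have ht := Dk_test (hK.test n) k
  refine apply_le_of_scale he (fun φ hφ hs => hu φ hφ hs _ he (ep_le_one n))
    (ht.comp_sub_left x).sm
    (tsupport_comp_sub_subset ((tsupport_Dk_subset _ _).trans (hK.supp n)) x) (by positivity) ?_
  intro i hi y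
  have e : (fun y => Dk k (K n) (x - y)) = fun y => 1 * Dk k (K n) (x + (-1 : ℝ) • y) := by
    funext y; simp [sub_eq_add_neg]
  rw [e, norm_iterD_affine ht.sm]
  have h1 := norm_iterD_Dk_le (hK.test n).sm k i (x + (-1 : ℝ) • y)
  have h2 := hK.bd n (i + wt k) (by omega) (x + (-1 : ℝ) • y)
  rw [le_div_iff₀ (by positivity)]
  refine le_trans ?_ h2
  rw [show d + (i + wt k) = (d + i) + wt k by ring, pow_add _ (d + i)]
  simp only [abs_one, abs_neg, one_pow, one_mul, mul_assoc]
  exact mul_le_mul_of_nonneg_right h1 (by positivity)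

/-- Fine scales `2⁻ⁿ ≤ l`: the convolution `K_n ⋆ ψ` is a test function at scale `2 l`, and the mass
of `K_n` contributes the factor `2^{-nβ}`. -/
lemma bound_cv (hK : KerBd d β A m K) (hu : SmallAt r C γ x u) (n : ℕ) {l : ℝ} {ψ : Rd d → ℝ}
    (hl : 0 < l) (hl2 : l ≤ 1 / 2) (hψ : TestAt r x l ψ) (hel : ep n ≤ l) :
    |u (cv (K n) ψ)| ≤ C * (2 * l) ^ γ * (A * ep n ^ β * vol1 d * 2 ^ (d + r)) := by
  have he := ep_pos n
  have hA := hK.pos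
  have hV := vol1_pos d
  refine apply_le_of_scale (by positivity)
    (fun φ hφ hs => hu φ hφ hs (2 * l) (by positivity) (by linarith))
    (cv_test (hK.test n) hψ.test).sm ?_ (by positivity) ?_
  · exact (cv_support (hK.supp n) hψ.supp).trans (closedBall_subset_closedBall (by linarith))
  intro i hi y
  have h1 := norm_iterD_cv_le i (hK.test n) hψ.test (hψ.bd i hi) y
  have h2 := hK.integral_le n
  calc _ ≤ (A * ep n ^ β * vol1 d) * (1 / l ^ (d + i)) * (2 * l) ^ (d + i) := by
        gcongr
        exact h1.trans (mul_le_mul_of_nonneg_right h2 (by positivity))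
    _ = (A * ep n ^ β * vol1 d) * 2 ^ (d + i) := by rw [mul_pow]; field_simp
    _ ≤ _ := by gcongr; norm_num

/-- Coarse scales `l ≤ 2⁻ⁿ`: the Taylor remainder is a test function at scale `2 · 2⁻ⁿ` and gains
the factor `(l / 2⁻ⁿ) ^ ⌈c⌉`. -/
lemma bound_tg (hK : KerBd d β A m K) (hu : SmallAt r C γ x u) (n : ℕ) {l c : ℝ} {ψ : Rd d → ℝ}
    (hc : ⌈c⌉₊ + r ≤ m) (hl : 0 < l) (hψ : TestAt r x l ψ) (hel : l ≤ ep n)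
    (he2 : ep n ≤ 1 / 2) :
    |u (tg c x (K n) ψ)| ≤ C * (2 * ep n) ^ γ *
      (vol1 d * A * 2 ^ (d + r) * (ep n ^ β * (l ^ ⌈c⌉₊ / ep n ^ ⌈c⌉₊))) := by
  have he := ep_pos n
  have hA := hK.pos
  have hV := vol1_pos d
  refine apply_le_of_scale (by positivity)
    (fun φ hφ hs => hu φ hφ hs (2 * ep n) (by positivity) (by linarith))
    (tg_test c x (hK.test n) hψ.test) ?_ (by positivity) ?_
  · exact (tg_support c x hl.le (hK.supp n) hψ.supp).trans
      (closedBall_subset_closedBall (by linarith))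
  intro i hi y
  have h1 := norm_iterD_tg_le i c x (hK.test n) hψ.test hl.le hψ.supp
    (B := A * ep n ^ β / ep n ^ (d + (⌈c⌉₊ + i))) (fun y => by
      rw [le_div_iff₀ (by positivity)]
      exact hK.bd n _ (by omega) y) y
  calc _ ≤ vol1 d * (A * ep n ^ β / ep n ^ (d + (⌈c⌉₊ + i)) * l ^ ⌈c⌉₊) *
          (2 * ep n) ^ (d + i) := by
        gcongr
        exact h1.trans (mul_le_mul_of_nonneg_right hψ.int (by positivity))
    _ = vol1 d * A * 2 ^ (d + i) * (ep n ^ β * (l ^ ⌈c⌉₊ / ep n ^ ⌈c⌉₊)) := by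
        rw [mul_pow, show d + (⌈c⌉₊ + i) = (d + i) + ⌈c⌉₊ by ring, pow_add _ (d + i) ⌈c⌉₊]
        field_simp
    _ ≤ _ := by gcongr; norm_num

lemma tg_eq (c : ℝ) (x : Rd d) (K ψ : Rd d → ℝ) :
    tg c x K ψ = cv K ψ - ∑ k ∈ multiIdxLt d c,
      ((mfac k : ℝ)⁻¹ * ∫ z, mono k (z - x) * ψ z) • fun y => Dk k K (x - y) := by
  funext y
  simp [tg, Finset.sum_apply]

/-- The sum over scales of the remainders of the Taylor-corrected convolution is `O(λ^{γ+β})`,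
uniformly over all functionals `u` that are `O(λ^γ)` at `x`. Scales below `λ` are handled term by
term, scales above `λ` by Taylor's formula; the coarsest scale, whose support is larger than the
unit scale, is handled by a crude continuity estimate of `u`. -/
lemma scale_sum (hK : KerBd d β A m K) (hβ : 0 < β) {s : ℝ} (hs : s = γ + β)
    (hγ : 0 < γ)
    (hsN : ∀ j : ℕ, s ≠ j) (hm : ⌈s⌉₊ + r ≤ m) {C1 C2 : ℝ} (hC1 : 0 ≤ C1) (hC2 : 0 ≤ C2) (q : ℕ) :
    ∃ Cf : ℝ, 0 ≤ Cf ∧ ∀ (x : Rd d) (u : (Rd d → ℝ) →ₗ[ℝ] ℝ), SmallAt r C1 γ x u →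
      (∀ g, IsTestFunction g → tsupport g ⊆ closedBall x 2 → ∀ B : ℝ,
        (∀ i ≤ q, ∀ y, ‖iteratedFDeriv ℝ i g y‖ ≤ B) → |u g| ≤ C2 * B) →
      (∀ k ∈ multiIdxLt d s, Summable fun n => u (fun y => Dk k (K n) (x - y))) ∧
      ∀ ψ l, 0 < l → l ≤ 1 / 2 → TestAt r x l ψ →
        Summable (fun n => u (cv (K n) ψ)) ∧
        |∑' n, u (cv (K n) ψ) - ∑ k ∈ multiIdxLt d s,
          ((mfac k : ℝ)⁻¹ * ∑' n, u (fun y => Dk k (K n) (x - y))) *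
            ∫ z, mono k (z - x) * ψ z| ≤ Cf * l ^ s := by
  have hs0 : 0 < s := by linarith
  set M := ⌈s⌉₊ with hM
  have hMs : s < M := lt_of_le_of_ne (Nat.le_ceil s) (hsN M)
  have hM1 : (M : ℝ) - 1 < s := by
    have := Nat.ceil_lt_add_one hs0.le
    linarith
  have hMpos : 0 < M := Nat.ceil_pos.2 hs0
  -- a decay rate valid in both regimes; it is positive because `M - 1 < s < M`
  obtain ⟨q0, hq0, hqβ, hq1, hq2⟩ : ∃ q0 : ℝ, 0 < q0 ∧ q0 ≤ β ∧ q0 ≤ s - (M - 1) ∧ q0 ≤ M - s :=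
    ⟨min β (min (s - (M - 1)) (M - s)),
      lt_min hβ (lt_min (by linarith) (by linarith)), min_le_left _ _,
      (min_le_right _ _).trans (min_le_left _ _), (min_le_right _ _).trans (min_le_right _ _)⟩
  have hkM : ∀ k ∈ multiIdxLt d s, wt k + 1 ≤ M := fun k hk => by
    rw [mem_multiIdxLt] at hk
    exact_mod_cast (hk.trans hMs : (wt k : ℝ) < M)
  obtain ⟨S, hS0, hS⟩ := exists_dyadic_sum hq0
  -- a common bound for the derivatives of `K 0` up to order `M + q`
  obtain ⟨A0, hA0, hA0b⟩ : ∃ A0 : ℝ, 0 ≤ A0 ∧ ∀ i ≤ q, ∀ y,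
      ‖iteratedFDeriv ℝ (M + i) (K 0) y‖ ≤ A0 := by
    have h0 := hK.test 0
    have : ∀ i, ∃ a : ℝ, ∀ y, ‖iteratedFDeriv ℝ (M + i) (K 0) y‖ ≤ a := fun i => by
      obtain ⟨a, ha⟩ := (h0.2.iteratedFDeriv (𝕜 := ℝ) (M + i)).exists_bound_of_continuous
        (h0.1.continuous_iteratedFDeriv (by exact_mod_cast le_top))
      exact ⟨a, ha⟩
    choose a ha using this
    refine ⟨∑ i ∈ Finset.range (q + 1), |a i|, by positivity, fun i hi y => ?_⟩
    exact ((ha i y).trans (le_abs_self _)).trans (Finset.single_le_sum (f := fun i => |a i|)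
      (fun _ _ => abs_nonneg _) (Finset.mem_range.2 (by omega)))
  have hA := hK.pos
  have hV := vol1_pos d
  set Q : ℝ := C1 * 2 ^ γ * (A * vol1 d * 2 ^ (d + r)) +
    (multiIdxLt d s).card * (vol1 d * C1 * A) + C2 * (vol1 d * A0) with hQ
  have hQ0 : 0 ≤ Q := by positivity
  refine ⟨Q * S, by positivity, fun x u hu hu2 => ?_⟩
  have hsumk : ∀ k ∈ multiIdxLt d s, Summable fun n => u (fun y => Dk k (K n) (x - y)) := by
    intro k hk
    have hk' := (mem_multiIdxLt).1 hk
    refine Summable.of_norm_bounded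
      (((summable_ep_rpow (q := s - wt k) (by linarith)).mul_left (C1 * A))) fun n => ?_
    rw [Real.norm_eq_abs]
    refine (bound_Dk hK hu n k (by have := hkM k hk; omega)).trans (le_of_eq ?_)
    have he := ep_pos n
    rw [Real.rpow_sub he, hs, Real.rpow_add he, Real.rpow_natCast]
    ring
  refine ⟨hsumk, fun ψ l hl hl2 hψ => ?_⟩
  set c : (Fin d → ℕ) → ℝ := fun k => (mfac k : ℝ)⁻¹ * ∫ z, mono k (z - x) * ψ z with hc
  have hcb : ∀ k, |c k| ≤ vol1 d * l ^ wt k := fun k => by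
    rw [hc, abs_mul]
    have h1 := abs_integral_mono_le hψ.test hl hψ.supp hψ.int k
    have h2 : |(mfac k : ℝ)⁻¹| ≤ 1 := by
      rw [abs_of_nonneg (by positivity)]
      exact inv_le_one_of_one_le₀ (by exact_mod_cast Nat.one_le_iff_ne_zero.2 (mod_cast mfac_ne_zero k))
    calc _ ≤ 1 * _ := mul_le_mul h2 h1 (abs_nonneg _) zero_le_one
      _ = _ := one_mul _
  have hut : ∀ n, u (tg s x (K n) ψ) = u (cv (K n) ψ) -
      ∑ k ∈ multiIdxLt d s, c k * u (fun y => Dk k (K n) (x - y)) := fun n => by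
    rw [tg_eq, map_sub, map_sum]
    simp [hc]
  have key : ∀ n, |u (tg s x (K n) ψ)| ≤
      Q * l ^ s * (min (ep n / l) (l / ep n)) ^ q0 := by
    intro n
    have he := ep_pos n
    have hls : 0 < l ^ s := by positivity
    rcases le_total (ep n) l with hel | hel
    · have hmin : min (ep n / l) (l / ep n) = ep n / l := min_eq_left (by
        rw [div_le_div_iff₀ hl he]; nlinarith)
      rw [hmin]
      set t := ep n / l with ht
      have ht0 : 0 < t := by positivity
      have ht1 : t ≤ 1 := (div_le_one hl).2 hel
      have het : ep n = l * t := by rw [ht]; field_simp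
      have h1 : |u (cv (K n) ψ)| ≤ C1 * 2 ^ γ * (A * vol1 d * 2 ^ (d + r)) * (l ^ s * t ^ q0) := by
        refine (bound_cv hK hu n hl hl2 hψ hel).trans ?_
        have : t ^ β ≤ t ^ q0 := Real.rpow_le_rpow_of_exponent_ge ht0 ht1 hqβ
        calc _ = C1 * 2 ^ γ * (A * vol1 d * 2 ^ (d + r)) * (l ^ s * t ^ β) := by
              rw [het, Real.mul_rpow (by norm_num) hl.le, Real.mul_rpow hl.le ht0.le, hs,
                Real.rpow_add hl]
              ring
          _ ≤ _ := by gcongr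
      have h2 : ∀ k ∈ multiIdxLt d s, |c k * u (fun y => Dk k (K n) (x - y))| ≤
          vol1 d * C1 * A * (l ^ s * t ^ q0) := by
        intro k hk
        have hk1 := hkM k hk
        have hk2 : q0 ≤ s - wt k := by
          have : (wt k : ℝ) + 1 ≤ M := by exact_mod_cast hk1
          linarith
        have : t ^ (s - wt k) ≤ t ^ q0 := Real.rpow_le_rpow_of_exponent_ge ht0 ht1 hk2
        rw [abs_mul]
        calc _ ≤ (vol1 d * l ^ wt k) * (C1 * ep n ^ γ * (A * ep n ^ β / ep n ^ wt k)) :=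
              mul_le_mul (hcb k) (bound_Dk hK hu n k (by omega)) (abs_nonneg _) (by positivity)
          _ = vol1 d * C1 * A * (l ^ s * t ^ (s - wt k)) := by
              rw [Real.rpow_sub ht0, hs, het, Real.mul_rpow hl.le ht0.le,
                Real.mul_rpow hl.le ht0.le, Real.rpow_add hl, Real.rpow_add ht0,
                Real.rpow_natCast, mul_pow]
              field_simp
          _ ≤ _ := by gcongr
      rw [hut]
      calc _ ≤ |u (cv (K n) ψ)| + |∑ k ∈ multiIdxLt d s, c k * u (fun y => Dk k (K n) (x - y))| :=
            abs_sub _ _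
        _ ≤ C1 * 2 ^ γ * (A * vol1 d * 2 ^ (d + r)) * (l ^ s * t ^ q0) +
            (multiIdxLt d s).card * (vol1 d * C1 * A * (l ^ s * t ^ q0)) := by
            refine add_le_add h1 ((Finset.abs_sum_le_sum_abs _ _).trans ?_)
            rw [← nsmul_eq_mul]
            exact Finset.sum_le_card_nsmul _ _ _ h2
        _ ≤ C1 * 2 ^ γ * (A * vol1 d * 2 ^ (d + r)) * (l ^ s * t ^ q0) +
            (multiIdxLt d s).card * (vol1 d * C1 * A * (l ^ s * t ^ q0)) +
            C2 * (vol1 d * A0) * (l ^ s * t ^ q0) := le_add_of_nonneg_right (by positivity)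
        _ = _ := by rw [hQ]; ring
    · have hmin : min (ep n / l) (l / ep n) = l / ep n := min_eq_right (by
        rw [div_le_div_iff₀ he hl]; nlinarith)
      rw [hmin]
      set t := l / ep n with ht
      have ht0 : 0 < t := by positivity
      have ht1 : t ≤ 1 := (div_le_one he).2 hel
      have htM : t ^ ((M : ℝ) - s) ≤ t ^ q0 := Real.rpow_le_rpow_of_exponent_ge ht0 ht1 hq2
      rcases Nat.eq_zero_or_pos n with rfl | hn
      · have he0 : ep 0 = 1 := by simp [ep]
        have htl : t = l := by rw [ht, he0, div_one]
        have := hu2 _ ⟨tg_test s x (hK.test 0) hψ.test, (isCompact_closedBall x (ep 0 + l)).of_isClosed_subset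
            (isClosed_tsupport _) (tg_support s x hl.le (hK.supp 0) hψ.supp)⟩
          ((tg_support s x hl.le (hK.supp 0) hψ.supp).trans
            (closedBall_subset_closedBall (by rw [he0]; linarith)))
          (vol1 d * (A0 * l ^ M)) (fun i hi y =>
            (norm_iterD_tg_le i s x (hK.test 0) hψ.test hl.le hψ.supp (hA0b i hi) y).trans
              (mul_le_mul_of_nonneg_right hψ.int (by positivity)))
        refine this.trans ?_
        calc _ = C2 * (vol1 d * A0) * (l ^ s * t ^ ((M : ℝ) - s)) := by
              rw [htl, ← Real.rpow_add hl, add_sub_cancel, Real.rpow_natCast]; ring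
          _ ≤ C2 * (vol1 d * A0) * (l ^ s * t ^ q0) := by gcongr
          _ ≤ Q * (l ^ s * t ^ q0) := by
              refine mul_le_mul_of_nonneg_right ?_ (by positivity)
              rw [hQ]
              exact le_add_of_nonneg_left (by positivity)
          _ = _ := by ring
      · have he2 : ep n ≤ 1 / 2 := by
          obtain ⟨p, rfl⟩ : ∃ p, n = p + 1 := ⟨n - 1, by omega⟩
          have := ep_le_one p
          rw [ep, pow_succ, ← ep]; linarith
        refine (bound_tg hK hu n hm hl hψ hel he2).trans ?_
        have hlt : l = ep n * t := by rw [ht]; field_simp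
        calc _ = C1 * 2 ^ γ * (A * vol1 d * 2 ^ (d + r)) * (l ^ s * t ^ ((M : ℝ) - s)) := by
              have e1 : l ^ s * t ^ ((M : ℝ) - s) = ep n ^ s * t ^ M := by
                rw [hlt, Real.mul_rpow he.le ht0.le, mul_assoc, ← Real.rpow_add ht0,
                  add_sub_cancel, Real.rpow_natCast]
              rw [e1, ← hM, Real.mul_rpow (by norm_num) he.le, ← div_pow, ← ht, hs, Real.rpow_add he]
              ring
          _ ≤ C1 * 2 ^ γ * (A * vol1 d * 2 ^ (d + r)) * (l ^ s * t ^ q0) := by gcongr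
          _ ≤ Q * (l ^ s * t ^ q0) := by
              refine mul_le_mul_of_nonneg_right ?_ (by positivity)
              have h3 : 0 ≤ ((multiIdxLt d s).card : ℝ) * (vol1 d * C1 * A) :=
                mul_nonneg (Nat.cast_nonneg _) (mul_nonneg (mul_nonneg hV.le hC1) hA.le)
              have h4 : 0 ≤ C2 * (vol1 d * A0) := mul_nonneg hC2 (mul_nonneg hV.le hA0)
              rw [hQ]
              linarith
          _ = _ := by ring
  obtain ⟨hSs, hSle⟩ := hS l hl (by linarith)
  have hst : Summable fun n => u (tg s x (K n) ψ) :=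
    Summable.of_norm_bounded (hSs.mul_left (Q * l ^ s)) key
  have hsk : Summable fun n => ∑ k ∈ multiIdxLt d s, c k * u (fun y => Dk k (K n) (x - y)) :=
    summable_sum fun k hk => (hsumk k hk).mul_left _
  have hcv : ∀ n, u (cv (K n) ψ) = u (tg s x (K n) ψ) +
      ∑ k ∈ multiIdxLt d s, c k * u (fun y => Dk k (K n) (x - y)) := fun n => by
    rw [hut]; ring
  have hcv' := funext hcv
  refine ⟨by rw [hcv']; exact hst.add hsk, ?_⟩
  have : ∑' n, u (cv (K n) ψ) - ∑ k ∈ multiIdxLt d s,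
          ((mfac k : ℝ)⁻¹ * ∑' n, u (fun y => Dk k (K n) (x - y))) *
            ∫ z, mono k (z - x) * ψ z = ∑' n, u (tg s x (K n) ψ) := by
    rw [hcv', hst.tsum_add hsk, Summable.tsum_finsetSum fun k hk => (hsumk k hk).mul_left _]
    simp_rw [tsum_mul_left, hc]
    rw [add_sub_assoc, sub_eq_zero.2, add_zero]
    exact Finset.sum_congr rfl fun k _ => by ring
  rw [this, ← Real.norm_eq_abs]
  calc _ ≤ ∑' n, Q * l ^ s * (min (ep n / l) (l / ep n)) ^ q0 :=
        tsum_of_norm_bounded (hSs.mul_left _).hasSum key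
    _ = Q * l ^ s * ∑' n, (min (ep n / l) (l / ep n)) ^ q0 := tsum_mul_left
    _ ≤ Q * l ^ s * S := mul_le_mul_of_nonneg_left hSle
        (mul_nonneg hQ0 (Real.rpow_nonneg hl.le _))
    _ = _ := by ring

end Scales

/-! ### The local expansion of `K * Rf` -/

section Model

variable {d : ℕ}

lemma exists_kerBd {β Cbar : ℝ} {m : ℕ} (hd : 1 ≤ d) {K : ℕ → Rd d → ℝ}
    (hKsmooth : ∀ n, ContDiff ℝ (⊤ : ℕ∞) (K n))
    (hKsupp : ∀ n, tsupport (K n) ⊆ Metric.closedBall 0 ((2 : ℝ)⁻¹ ^ n))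
    (hKbound : ∀ n, ∀ k' : Fin d → ℕ, wt k' ≤ m → ∀ y : Rd d,
      |Dk k' (K n) y| ≤ Cbar * (2 : ℝ) ^ ((n : ℝ) * ((d : ℝ) - β + (wt k' : ℝ)))) :
    ∃ A, KerBd d β A m K := by
  refine ⟨(d : ℝ) ^ m * |Cbar| + 1, by positivity, fun n => ⟨hKsmooth n,
    (isCompact_closedBall _ _).of_isClosed_subset (isClosed_tsupport _) (hKsupp n)⟩, hKsupp,
    fun n q hq y => ?_⟩
  have he := ep_pos n
  have h1 := norm_iterD_le_of_Dk (hKsmooth n) q y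
    (|Cbar| * (2 : ℝ) ^ ((n : ℝ) * ((d : ℝ) - β + q))) (fun k hk => by
      refine (hKbound n k (by omega) y).trans ?_
      rw [hk]
      exact mul_le_mul_of_nonneg_right (le_abs_self _) (by positivity))
  have h2 : (2 : ℝ) ^ ((n : ℝ) * ((d : ℝ) - β + q)) * ep n ^ (d + q) = ep n ^ β := by
    have : ep n = (2 : ℝ) ^ (-(n : ℝ)) := by
      rw [ep, Real.rpow_neg (by norm_num), Real.rpow_natCast, inv_pow]
    rw [← Real.rpow_natCast, this, ← Real.rpow_mul (by norm_num), ← Real.rpow_mul (by norm_num),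
      ← Real.rpow_add (by norm_num)]
    congr 1
    push_cast
    ring
  have hd1 : (1 : ℝ) ≤ d := by exact_mod_cast hd
  calc _ ≤ (d : ℝ) ^ q * (|Cbar| * (2 : ℝ) ^ ((n : ℝ) * ((d : ℝ) - β + q))) * ep n ^ (d + q) := by
        gcongr
    _ = (d : ℝ) ^ q * |Cbar| * ep n ^ β := by rw [← h2]; ring
    _ ≤ ((d : ℝ) ^ m * |Cbar| + 1) * ep n ^ β := by
        gcongr
        have : (d : ℝ) ^ q ≤ (d : ℝ) ^ m := pow_le_pow_right₀ hd1 hq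
        nlinarith [abs_nonneg Cbar]

/-- Summability over scales of `u(K_n ⋆ ψ)` for a distribution `u`. -/
lemma summable_cv {β A : ℝ} {m : ℕ} {K : ℕ → Rd d → ℝ} (hK : KerBd d β A m K) (hβ : 0 < β)
    {u : (Rd d → ℝ) →ₗ[ℝ] ℝ} (hu : IsDistribution u) {ψ : Rd d → ℝ} (hψ : IsTestFunction ψ) :
    Summable fun n => u (cv (K n) ψ) := by
  obtain ⟨R, hR⟩ := hψ.2.isBounded.subset_closedBall (0 : Rd d)
  obtain ⟨C, q, hC⟩ := hu _ (isCompact_closedBall (0 : Rd d) (1 + R))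
  have : ∀ i, ∃ a : ℝ, ∀ y, ‖iteratedFDeriv ℝ i ψ y‖ ≤ a := fun i => by
    obtain ⟨a, ha⟩ := (hψ.2.iteratedFDeriv (𝕜 := ℝ) i).exists_bound_of_continuous
      (hψ.1.continuous_iteratedFDeriv (by exact_mod_cast le_top))
    exact ⟨a, ha⟩
  choose a ha using this
  set B := ∑ i ∈ Finset.range (q + 1), |a i|
  have hB : ∀ i ≤ q, ∀ y, ‖iteratedFDeriv ℝ i ψ y‖ ≤ B := fun i hi y =>
    ((ha i y).trans (le_abs_self _)).trans (Finset.single_le_sum (f := fun i => |a i|)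
      (fun _ _ => abs_nonneg _) (Finset.mem_range.2 (by omega)))
  have hB0 : 0 ≤ B := by positivity
  refine Summable.of_norm_bounded
    ((summable_ep_rpow hβ).mul_left (|C| * (A * vol1 d * B))) fun n => ?_
  rw [Real.norm_eq_abs]
  refine (hC _ (cv_test (hK.test n) hψ) ((cv_support (hK.supp n) hR).trans
    (closedBall_subset_closedBall (by linarith [ep_le_one n]))) (A * ep n ^ β * vol1 d * B)
    fun i hi y => (norm_iterD_cv_le i (hK.test n) hψ (hB i hi) y).trans
      (mul_le_mul_of_nonneg_right (hK.integral_le n) hB0)).trans ?_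
  have hA := hK.pos
  have hV := vol1_pos d
  have he := ep_pos n
  calc _ ≤ |C| * (A * ep n ^ β * vol1 d * B) :=
        mul_le_mul_of_nonneg_right (le_abs_self _) (by positivity)
    _ = _ := by ring

variable {ι : Type} [Fintype ι] [DecidableEq ι]
  {T : ι → Type} [∀ i, NormedAddCommGroup (T i)] [∀ i, NormedSpace ℝ (T i)]

lemma sum_single_eq {ι : Type} [Fintype ι] [DecidableEq ι] {T : ι → Type}
    [∀ i, NormedAddCommGroup (T i)] (τ : ∀ i, T i) : ∑ i, Pi.single i (τ i) = τ := Finset.univ_sum_single τ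

/-- Structure group elements do not create components in high degrees. -/
lemma group_tri {deg : ι → ℝ} {G : Set ((∀ i, T i) ≃ₗ[ℝ] (∀ i, T i))}
    (hG : IsStructureGroup deg G) {g : (∀ i, T i) ≃ₗ[ℝ] (∀ i, T i)} (hg : g ∈ G) {c : ℝ}
    {τ : ∀ i, T i} (hτ : ∀ i, c ≤ deg i → τ i = 0) (i : ι) (hi : c ≤ deg i) : g τ i = 0 := by
  rw [← sum_single_eq τ, map_sum, Finset.sum_apply]
  refine Finset.sum_eq_zero fun j _ => ?_
  by_cases hj : c ≤ deg j
  · rw [hτ j hj]; simp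
  · have h := hG.2.2.2 g hg j (τ j) i (by linarith)
    have hne : i ≠ j := by rintro rfl; exact hj hi
    simpa [Pi.single_eq_of_ne hne] using h

/-- The modelled distribution transported to the origin is locally bounded. -/
lemma bounded_transport {r : ℕ} {deg : ι → ℝ} {G : Set ((∀ i, T i) ≃ₗ[ℝ] (∀ i, T i))}
    (hG : IsStructureGroup deg G)
    {Pmap : Rd d → (∀ i, T i) →ₗ[ℝ] ((Rd d → ℝ) →ₗ[ℝ] ℝ)}
    {Γ : Rd d → Rd d → ((∀ i, T i) ≃ₗ[ℝ] (∀ i, T i))} (hmodel : IsModel r deg G Pmap Γ)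
    {γ : ℝ} {f : Rd d → ∀ i, T i} (hf : InD deg γ Γ f) (R : ℝ) :
    ∃ C : ℝ, 0 ≤ C ∧ ∀ x ∈ closedBall (0 : Rd d) R, ‖Γ 0 x (f x)‖ ≤ C := by
  obtain ⟨C, hC⟩ := hf.2 _ (isCompact_closedBall (0 : Rd d) (max R 0))
  have hnn : 0 ≤ ∑ i, |C| * (max R 0) ^ (γ - deg i) :=
    Finset.sum_nonneg fun i _ => mul_nonneg (abs_nonneg _)
      (Real.rpow_nonneg (le_max_right _ _) _)
  refine ⟨‖f 0‖ + ∑ i, |C| * (max R 0) ^ (γ - deg i), by positivity, fun x hx => ?_⟩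
  refine (pi_norm_le_iff_of_nonneg (by positivity)).2 fun i => ?_
  by_cases hi : γ ≤ deg i
  · rw [group_tri hG (hmodel.1 0 x) (hf.1 x) i hi, norm_zero]; positivity
  have hi' : deg i < γ := lt_of_not_ge hi
  have hx' : ‖x‖ ≤ max R 0 := by
    rw [mem_closedBall, dist_zero_right] at hx
    exact hx.trans (le_max_left _ _)
  have h1 := hC i hi' 0 (by simp) x (by simpa using hx')
  have h2 : Γ 0 x (f x) i = f 0 i - (f 0 - Γ 0 x (f x)) i := by simp
  rw [h2]
  refine (norm_sub_le _ _).trans (add_le_add (norm_le_pi_norm (f 0) i) (h1.trans ?_))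
  rw [zero_sub, norm_neg]
  calc _ ≤ |C| * (max R 0) ^ (γ - deg i) :=
        mul_le_mul (le_abs_self _) (Real.rpow_le_rpow (norm_nonneg _) hx' (by linarith))
          (by positivity) (abs_nonneg _)
    _ ≤ _ := Finset.single_le_sum (f := fun i => |C| * (max R 0) ^ (γ - deg i))
        (fun i _ => mul_nonneg (abs_nonneg _) (Real.rpow_nonneg (le_max_right _ _) _))
        (Finset.mem_univ i)

/-- A linear family of distributions indexed by a finite-dimensional space is locally bounded
uniformly in the index. -/
lemma uniform_distribution {E : Type*} [NormedAddCommGroup E] [NormedSpace ℝ E]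
    [FiniteDimensional ℝ E] {P : E →ₗ[ℝ] ((Rd d → ℝ) →ₗ[ℝ] ℝ)}
    (hP : ∀ τ, IsDistribution (P τ)) {S : Set (Rd d)} (hS : IsCompact S) :
    ∃ C : ℝ, 0 ≤ C ∧ ∃ q : ℕ, ∀ (τ : E) (g : Rd d → ℝ), IsTestFunction g → tsupport g ⊆ S →
      ∀ B : ℝ, (∀ i ≤ q, ∀ y, ‖iteratedFDeriv ℝ i g y‖ ≤ B) → |P τ g| ≤ C * ‖τ‖ * B := by
  set b := Module.finBasis ℝ E
  choose C k hC using fun j => hP (b j) S hS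
  set c : _ → ℝ := fun j => ‖LinearMap.toContinuousLinearMap (b.coord j)‖
  refine ⟨∑ j, c j * |C j|, Finset.sum_nonneg fun j _ => by positivity,
    Finset.univ.sup k, fun τ g hg hgS B hB => ?_⟩
  have hB0 : 0 ≤ B := (norm_nonneg _).trans (hB 0 (Nat.zero_le _) 0)
  have h1 : P τ g = ∑ j, b.repr τ j * P (b j) g := by
    conv_lhs => rw [← b.sum_repr τ]
    rw [map_sum, LinearMap.sum_apply]
    exact Finset.sum_congr rfl fun j _ => by rw [map_smul, LinearMap.smul_apply, smul_eq_mul]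
  rw [h1, Finset.sum_mul, Finset.sum_mul]
  refine (Finset.abs_sum_le_sum_abs _ _).trans (Finset.sum_le_sum fun j _ => ?_)
  rw [abs_mul]
  have h2 : |b.repr τ j| ≤ c j * ‖τ‖ := by
    have := (LinearMap.toContinuousLinearMap (b.coord j)).le_opNorm τ
    simpa using this
  have h3 : |P (b j) g| ≤ |C j| * B :=
    (hC j g hg hgS B fun i hi => hB i (hi.trans (Finset.le_sup (Finset.mem_univ j)))).trans
      (mul_le_mul_of_nonneg_right (le_abs_self _) hB0)
  calc _ ≤ (c j * ‖τ‖) * (|C j| * B) := mul_le_mul h2 h3 (abs_nonneg _) (by positivity)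
    _ = _ := by ring

/-- The distributions `Rf - Π_x f(x)` are bounded near `x` by finitely many derivatives, with order
and constant locally uniform in `x`: `Π_x f(x)` equals `Π_0 (Γ_{0x} f(x))`, where `Γ_{0x} f(x)` is
locally bounded. -/
lemma uniform_error [∀ i, FiniteDimensional ℝ (T i)] {r : ℕ} {deg : ι → ℝ}
    {G : Set ((∀ i, T i) ≃ₗ[ℝ] (∀ i, T i))}
    (hG : IsStructureGroup deg G)
    {Pmap : Rd d → (∀ i, T i) →ₗ[ℝ] ((Rd d → ℝ) →ₗ[ℝ] ℝ)}
    {Γ : Rd d → Rd d → ((∀ i, T i) ≃ₗ[ℝ] (∀ i, T i))} (hmodel : IsModel r deg G Pmap Γ)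
    {γ : ℝ} {f : Rd d → ∀ i, T i} (hf : InD deg γ Γ f)
    {Rf : (Rd d → ℝ) →ₗ[ℝ] ℝ} (hRf : IsDistribution Rf) (R : ℝ) :
    ∃ C : ℝ, 0 ≤ C ∧ ∃ q : ℕ, ∀ x ∈ closedBall (0 : Rd d) R, ∀ g, IsTestFunction g →
      tsupport g ⊆ closedBall x 2 → ∀ B : ℝ,
        (∀ i ≤ q, ∀ y, ‖iteratedFDeriv ℝ i g y‖ ≤ B) → |(Rf - Pmap x (f x)) g| ≤ C * B := by
  have hS := isCompact_closedBall (0 : Rd d) (R + 2)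
  obtain ⟨C1, q1, h1⟩ := hRf _ hS
  obtain ⟨C2, hC2, q2, h2⟩ := uniform_distribution (hmodel.2.1 0) hS
  obtain ⟨C3, hC3, h3⟩ := bounded_transport hG hmodel hf R
  refine ⟨|C1| + C2 * C3, by positivity, max q1 q2, fun x hx g hg hgs B hB => ?_⟩
  have hB0 : 0 ≤ B := (norm_nonneg _).trans (hB 0 (Nat.zero_le _) 0)
  have hgS : tsupport g ⊆ closedBall 0 (R + 2) := hgs.trans (closedBall_subset_closedBall' (by
    rw [mem_closedBall] at hx; linarith))
  rw [LinearMap.sub_apply, ← hmodel.2.2.2.1 0 x (f x) g]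
  have e1 := h1 g hg hgS B fun i hi => hB i (hi.trans (le_max_left _ _))
  have e2 := h2 (Γ 0 x (f x)) g hg hgS B fun i hi => hB i (hi.trans (le_max_right _ _))
  calc _ ≤ |Rf g| + |Pmap 0 (Γ 0 x (f x)) g| := abs_sub _ _
    _ ≤ |C1| * B + C2 * C3 * B := add_le_add
        (e1.trans (mul_le_mul_of_nonneg_right (le_abs_self _) hB0))
        (e2.trans (by gcongr; exact h3 x hx))
    _ = _ := by ring

/-- The operator `𝓚f = 𝓘f + 𝓙f + 𝓝f`. -/
def Kmap (deg : ι → ℝ) (β γ : ℝ)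
    (Pmap : Rd d → (∀ i, T i) →ₗ[ℝ] ((Rd d → ℝ) →ₗ[ℝ] ℝ))
    (Imap : (∀ i, T i) →ₗ[ℝ] (∀ i, T i))
    (Kn : ℕ → Rd d → ℝ) (X : (Fin d → ℕ) → ∀ i, T i)
    (f : Rd d → ∀ i, T i) (Rf : (Rd d → ℝ) →ₗ[ℝ] ℝ) (x : Rd d) : ∀ i, T i :=
  Imap (f x) + Jmap deg β Pmap Kn X x (f x) + Nmap (γ + β) Pmap Rf Kn X f x

lemma Jmap_single (deg : ι → ℝ) (β : ℝ)
    (Pmap : Rd d → (∀ i, T i) →ₗ[ℝ] ((Rd d → ℝ) →ₗ[ℝ] ℝ))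
    (Kn : ℕ → Rd d → ℝ) (X : (Fin d → ℕ) → ∀ i, T i) (x : Rd d) (i : ι) (v : T i) :
    Jmap deg β Pmap Kn X x (Pi.single i v) = ∑ k ∈ multiIdxLt d (deg i + β),
    (((mfac k : ℝ))⁻¹ *
      ∑' n : ℕ, Pmap x (Pi.single i v) fun y => Dk k (Kn n) (x - y)) • X k := by
  rw [Jmap, Finset.sum_eq_single i]
  · simp
  · intro j _ hj
    simp [Pi.single_eq_of_ne hj]
  · simp

lemma Jmap_eq_sum (deg : ι → ℝ) (β : ℝ)
    (Pmap : Rd d → (∀ i, T i) →ₗ[ℝ] ((Rd d → ℝ) →ₗ[ℝ] ℝ))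
    (Kn : ℕ → Rd d → ℝ) (X : (Fin d → ℕ) → ∀ i, T i) (x : Rd d) (τ : ∀ i, T i) :
    Jmap deg β Pmap Kn X x τ = ∑ i, Jmap deg β Pmap Kn X x (Pi.single i (τ i)) := by
  simp_rw [Jmap_single]
  rfl

/-- By admissibility the contribution of `𝓙(x) f(x)` to `Π_x (𝓚f)(x)` cancels the correction in
`Π_x 𝓘 f(x)`, which leaves `K * Π_x f(x)` plus the polynomial `(𝓝f)(x)`. -/
lemma Pmap_Kmap {deg : ι → ℝ} {β γ : ℝ} {N : ℕ}
    {Pmap : Rd d → (∀ i, T i) →ₗ[ℝ] ((Rd d → ℝ) →ₗ[ℝ] ℝ)}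
    {Imap : (∀ i, T i) →ₗ[ℝ] (∀ i, T i)} {X : (Fin d → ℕ) → ∀ i, T i}
    {Kn : ℕ → Rd d → ℝ}
    (hadm_poly : ∀ (x : Rd d) (k : Fin d → ℕ), wt k ≤ N →
      ∀ ψ : Rd d → ℝ, IsTestFunction ψ →
        Pmap x (X k) ψ = ∫ y, mono k (y - x) * ψ y)
    (hadm_int : ∀ (x : Rd d) (i : ι) (v : T i), deg i ≤ (N : ℝ) →
      ∀ ψ : Rd d → ℝ, IsTestFunction ψ →
        Pmap x (Imap (Pi.single i v)) ψ =
          (∑' n : ℕ, Pmap x (Pi.single i v) fun y => ∫ z, Kn n (z - y) * ψ z) -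
          Pmap x (Jmap deg β Pmap Kn X x (Pi.single i v)) ψ)
    (hβ : 0 < β) (hγN : γ < (N : ℝ) - β)
    {f : Rd d → ∀ i, T i} {x : Rd d} (hf : ∀ i : ι, γ ≤ deg i → f x i = 0)
    (Rf : (Rd d → ℝ) →ₗ[ℝ] ℝ) {ψ : Rd d → ℝ} (hψ : IsTestFunction ψ)
    (hsum : ∀ τ, Summable fun n => Pmap x τ (cv (Kn n) ψ)) :
    Pmap x (Kmap deg β γ Pmap Imap Kn X f Rf x) ψ =
      ∑' n, Pmap x (f x) (cv (Kn n) ψ) + ∑ k ∈ multiIdxLt d (γ + β),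
          ((mfac k : ℝ)⁻¹ * ∑' n, (Rf - Pmap x (f x)) (fun y => Dk k (Kn n) (x - y))) *
            ∫ z, mono k (z - x) * ψ z := by
  rw [Kmap, map_add, LinearMap.add_apply]
  congr 1
  · rw [Jmap_eq_sum]
    conv_lhs => rw [← sum_single_eq (f x)]
    rw [map_sum, map_add, map_sum, map_sum, LinearMap.add_apply, LinearMap.sum_apply,
      LinearMap.sum_apply, ← Finset.sum_add_distrib]
    have h1 : ∀ i, Pmap x (Imap (Pi.single i (f x i))) ψ +
        Pmap x (Jmap deg β Pmap Kn X x (Pi.single i ((∑ i, Pi.single i (f x i) : ∀ i, T i) i))) ψ =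
        ∑' n, Pmap x (Pi.single i (f x i)) (cv (Kn n) ψ) := by
      intro i
      rw [sum_single_eq]
      by_cases hi : γ ≤ deg i
      · rw [hf i hi, Jmap_single]; simp
      · rw [hadm_int x i (f x i) (by push Not at hi; linarith) ψ hψ, sub_add_cancel]
        rfl
    rw [Finset.sum_congr rfl fun i _ => h1 i, ← Summable.tsum_finsetSum fun i _ => hsum _]
    refine tsum_congr fun n => ?_
    conv_rhs => rw [← sum_single_eq (f x)]
    rw [map_sum, LinearMap.sum_apply]
  · rw [Nmap, map_sum, LinearMap.sum_apply]
    refine Finset.sum_congr rfl fun k hk => ?_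
    rw [map_smul, LinearMap.smul_apply, smul_eq_mul, hadm_poly x k _ ψ hψ]
    · simp
    · rw [mem_multiIdxLt] at hk
      have : (wt k : ℝ) ≤ N := by linarith
      exact_mod_cast this

/-- `K * Rf` is locally described by `Π_x (𝓚f)(x)` up to an error of order `γ + β`. -/
lemma local_expansion [∀ i, FiniteDimensional ℝ (T i)] {r N : ℕ} {deg : ι → ℝ} {β γ A : ℝ}
    {G : Set ((∀ i, T i) ≃ₗ[ℝ] (∀ i, T i))}
    (hG : IsStructureGroup deg G)
    {Pmap : Rd d → (∀ i, T i) →ₗ[ℝ] ((Rd d → ℝ) →ₗ[ℝ] ℝ)}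
    {Γ : Rd d → Rd d → ((∀ i, T i) ≃ₗ[ℝ] (∀ i, T i))} (hmodel : IsModel r deg G Pmap Γ)
    {Imap : (∀ i, T i) →ₗ[ℝ] (∀ i, T i)} {X : (Fin d → ℕ) → ∀ i, T i}
    {Kn : ℕ → Rd d → ℝ}
    (hadm_poly : ∀ (x : Rd d) (k : Fin d → ℕ), wt k ≤ N →
      ∀ ψ : Rd d → ℝ, IsTestFunction ψ →
        Pmap x (X k) ψ = ∫ y, mono k (y - x) * ψ y)
    (hadm_int : ∀ (x : Rd d) (i : ι) (v : T i), deg i ≤ (N : ℝ) →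
      ∀ ψ : Rd d → ℝ, IsTestFunction ψ →
        Pmap x (Imap (Pi.single i v)) ψ =
          (∑' n : ℕ, Pmap x (Pi.single i v) fun y => ∫ z, Kn n (z - y) * ψ z) -
          Pmap x (Jmap deg β Pmap Kn X x (Pi.single i v)) ψ)
    (hβ : 0 < β) (hγ : 0 < γ) (hγN : γ < (N : ℝ) - β) (hγβ : ∀ m : ℕ, γ + β ≠ (m : ℝ))
    (hK : KerBd d β A (N + r) Kn)
    {f : Rd d → ∀ i, T i} (hf : InD deg γ Γ f)
    {Rf : (Rd d → ℝ) →ₗ[ℝ] ℝ} (hRf : Reconstructs r Pmap γ f Rf) (R : ℝ) :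
    ∃ C : ℝ, 0 ≤ C ∧ ∀ x ∈ closedBall (0 : Rd d) R, ∀ ψ l, 0 < l → l ≤ 1 / 2 → TestAt r x l ψ →
      |∑' n, Rf (cv (Kn n) ψ) - Pmap x (Kmap deg β γ Pmap Imap Kn X f Rf x) ψ| ≤
        C * l ^ (γ + β) := by
  obtain ⟨C1, hC1⟩ := hRf.2 _ (isCompact_closedBall (0 : Rd d) R)
  obtain ⟨C2, hC2, q, hu2⟩ := uniform_error hG hmodel hf hRf.1 R
  have hm : ⌈γ + β⌉₊ + r ≤ N + r := by
    have : ⌈γ + β⌉₊ ≤ N := Nat.ceil_le.2 (by linarith)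
    omega
  obtain ⟨C, hC, h⟩ := scale_sum hK hβ rfl hγ hγβ hm (abs_nonneg C1) hC2 q
  refine ⟨C, hC, fun x hx ψ l hl hl2 hψ => ?_⟩
  have hsmall : SmallAt r |C1| γ x (Rf - Pmap x (f x)) := fun φ hφ _ l hl hl1 =>
    (hC1 x hx φ hφ l hl hl1).trans
      (mul_le_mul_of_nonneg_right (le_abs_self _) (Real.rpow_nonneg hl.le _))
  have h3 := ((h x _ hsmall (hu2 x hx)).2 ψ l hl hl2 hψ).2
  have hs : ∀ τ, Summable fun n => Pmap x τ (cv (Kn n) ψ) := fun τ =>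
    summable_cv hK hβ (hmodel.2.1 x τ) hψ.test
  rw [Pmap_Kmap hadm_poly hadm_int hβ hγN (hf.1 x) Rf hψ.test hs, ← sub_sub,
    ← (summable_cv hK hβ hRf.1 hψ.test).tsum_sub (hs _)]
  exact h3

end Model

/-! ### Test functions dual to the monomials -/

section Dual

variable {d : ℕ}

lemma mono_smooth (k : Fin d → ℕ) : Sm (mono k : Rd d → ℝ) := by
  unfold mono
  exact contDiff_prod fun j _ => ContDiff.pow (by fun_prop) _

/-- A polynomial vanishing near the origin has zero coefficients. -/
lemma coeff_eq_zero (S : Finset (Fin d → ℕ)) (c : (Fin d → ℕ) → ℝ) {ε : ℝ} (hε : 0 < ε)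
    (h : ∀ x ∈ ball (0 : Rd d) ε, ∑ k ∈ S, c k * mono k x = 0) : ∀ k ∈ S, c k = 0 := by
  set p : MvPolynomial (Fin d) ℝ :=
    ∑ k ∈ S, MvPolynomial.monomial (Finsupp.equivFunOnFinite.symm k) (c k) with hp
  have hcont : Continuous (fun v : Fin d → ℝ => (WithLp.toLp 2 v : Rd d)) :=
    PiLp.continuous_toLp 2 _
  have hopen : IsOpen ((fun v : Fin d → ℝ => (WithLp.toLp 2 v : Rd d)) ⁻¹' ball 0 ε) :=
    isOpen_ball.preimage hcont
  obtain ⟨δ, hδ, hδb⟩ := Metric.isOpen_iff.1 hopen 0 (by simpa using hε)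
  have hp0 : p = 0 := by
    refine MvPolynomial.funext_set (fun _ => ball (0 : ℝ) δ) (fun _ => ?_) fun v hv => ?_
    · rw [Real.ball_eq_Ioo]
      exact Ioo_infinite (by linarith)
    · have hv' : v ∈ ball (0 : Fin d → ℝ) δ := by
        rw [mem_ball, dist_pi_lt_iff hδ]
        exact fun i => hv i (mem_univ i)
      have := h _ (hδb hv')
      rw [map_zero, hp, map_sum, ← this]
      refine Finset.sum_congr rfl fun k _ => ?_
      rw [MvPolynomial.eval_monomial, mono, Finsupp.prod_fintype _ _ (fun _ => pow_zero _)]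
      rfl
  intro k hk
  have := congrArg (MvPolynomial.coeff (Finsupp.equivFunOnFinite.symm k)) hp0
  rw [hp, MvPolynomial.coeff_sum] at this
  simpa [MvPolynomial.coeff_monomial, Finset.sum_ite_eq, hk] using this

/-- Test functions dual to finitely many monomials: invert the Gram matrix of the monomials in
the `L²` space weighted by a bump function. -/
lemma exists_dual (S : Finset (Fin d → ℕ)) : ∃ φ : (Fin d → ℕ) → Rd d → ℝ,
    (∀ k, Sm (φ k) ∧ tsupport (φ k) ⊆ closedBall 0 1) ∧
    ∀ k ∈ S, ∀ j ∈ S, ∫ z, mono j z * φ k z = if j = k then 1 else 0 := by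
  classical
  let ρ : ContDiffBump (0 : Rd d) := ⟨1 / 2, 1, by norm_num, by norm_num⟩
  have hρs : Sm (ρ : Rd d → ℝ) := ρ.contDiff
  have hρc : HasCompactSupport (ρ : Rd d → ℝ) := ρ.hasCompactSupport
  have hint : ∀ j k : Fin d → ℕ, Integrable fun z : Rd d => mono j z * (mono k z * ρ z) :=
    fun j k => by
      refine ((continuous_mono j).mul ((continuous_mono k).mul hρs.continuous)).integrable_of_hasCompactSupport ?_
      exact (hρc.mul_left (f := mono k)).mul_left
  let Mx : Matrix S S ℝ := fun j k => ∫ z, mono j.1 z * (mono k.1 z * ρ z)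
  have hinj : IsUnit Mx := by
    rw [← Matrix.mulVec_injective_iff_isUnit]
    refine (injective_iff_map_eq_zero (Matrix.mulVecLin Mx)).2 fun c hc => ?_
    set P : Rd d → ℝ := fun z => ∑ k : S, c k * mono k.1 z with hP
    have hPc : Continuous P := continuous_finsetSum _ fun k _ => (continuous_mono _).const_mul _
    have h0 : ∫ z, P z * (P z * ρ z) = 0 := by
      have e : ∀ z, P z * (P z * ρ z) = ∑ j : S, c j * ∑ k : S, c k *
          (mono j.1 z * (mono k.1 z * ρ z)) := fun z => by
        rw [hP]
        simp only [Finset.sum_mul, Finset.mul_sum]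
        refine Finset.sum_congr rfl fun j _ => Finset.sum_congr rfl fun k _ => by ring
      simp_rw [e]
      rw [integral_finsetSum _ fun j _ => (integrable_finsetSum _ fun k _ =>
        (hint _ _).const_mul _).const_mul _]
      refine Finset.sum_eq_zero fun j _ => ?_
      rw [integral_const_mul, integral_finsetSum _ fun k _ => (hint _ _).const_mul _]
      simp_rw [integral_const_mul]
      have := congrFun hc j
      rw [Matrix.mulVecLin_apply, Matrix.mulVec, dotProduct] at this
      rw [show (∑ k : S, c k * ∫ z, mono j.1 z * (mono k.1 z * ρ z)) = ∑ k, Mx j k * c k from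
        Finset.sum_congr rfl fun k _ => mul_comm _ _, this]
      simp
    have hz : ∀ z, P z * (P z * ρ z) = 0 := by
      by_contra! hcon
      obtain ⟨z, hz⟩ := hcon
      have := (hPc.mul (hPc.mul hρs.continuous)).integral_pos_of_hasCompactSupport_nonneg_nonzero
        (μ := volume) ((hρc.mul_left (f := P)).mul_left (f := P))
        (fun z => by
          have := ρ.nonneg (x := z)
          simp only [Pi.zero_apply]
          rw [← mul_assoc]
          exact mul_nonneg (mul_self_nonneg _) this) hz
      exact this.ne' h0
    have hPz : ∀ x ∈ ball (0 : Rd d) (1 / 2),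
        ∑ k ∈ S, (if h : k ∈ S then c ⟨k, h⟩ else 0) * mono k x = 0 := by
      intro x hx
      have h1 : ρ x = 1 := ρ.one_of_mem_closedBall (ball_subset_closedBall hx)
      have h2 := hz x
      rw [h1, mul_one, mul_self_eq_zero] at h2
      rw [← h2, hP, ← Finset.sum_coe_sort S]
      refine Finset.sum_congr rfl fun k _ => ?_
      simp
    funext k
    have := coeff_eq_zero S _ (by norm_num) hPz k.1 k.2
    simpa using this
  have hMM : Mx * Mx⁻¹ = 1 := Matrix.mul_nonsing_inv _ ((Matrix.isUnit_iff_isUnit_det _).1 hinj)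
  refine ⟨fun k z => (∑ j : S, (if h : k ∈ S then Mx⁻¹ j ⟨k, h⟩ else 0) * mono j.1 z) * ρ z,
    fun k => ⟨?_, ?_⟩, fun k hk j hj => ?_⟩
  · exact (ContDiff.sum fun j _ => contDiff_const.mul (mono_smooth _)).mul hρs
  · refine (closure_mono ?_ : _ ⊆ tsupport (ρ : Rd d → ℝ)).trans ρ.tsupport_eq.le
    intro z hz
    exact right_ne_zero_of_mul hz
  · have e : ∀ z : Rd d, mono j z * ((∑ i : S, (if h : k ∈ S then Mx⁻¹ i ⟨k, h⟩ else 0) *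
        mono i.1 z) * ρ z) = ∑ i : S, Mx⁻¹ i ⟨k, hk⟩ * (mono j z * (mono i.1 z * ρ z)) := fun z => by
      simp only [hk, dite_true, Finset.sum_mul, Finset.mul_sum]
      exact Finset.sum_congr rfl fun i _ => by ring
    simp_rw [e]
    rw [integral_finsetSum _ fun i _ => (hint _ _).const_mul _]
    simp_rw [integral_const_mul]
    have := congrFun (congrFun hMM ⟨j, hj⟩) ⟨k, hk⟩
    rw [Matrix.mul_apply, Matrix.one_apply] at this
    simp only [Subtype.mk.injEq] at this
    rw [← this]
    exact Finset.sum_congr rfl fun i _ => mul_comm _ _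

end Dual

/-! ### Membership in `D^{γ+β}` -/

section Membership

variable {d : ℕ}

/-- The dual test functions, normalised to lie in `B_r`. -/
lemma exists_dual_Br (r : ℕ) (S : Finset (Fin d → ℕ)) : ∃ b : ℝ, 0 < b ∧
    ∃ φ : (Fin d → ℕ) → Rd d → ℝ, (∀ k ∈ S, Sm (φ k) ∧ φ k ∈ Br d r) ∧
    ∀ k ∈ S, ∀ j ∈ S, ∫ z, mono j z * φ k z = if j = k then b else 0 := by
  obtain ⟨φ, h1, h2⟩ := exists_dual S
  have : ∀ k i, ∃ a : ℝ, ∀ y, ‖iteratedFDeriv ℝ i (φ k) y‖ ≤ a := fun k i => by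
    have hc : HasCompactSupport (φ k) := (isCompact_closedBall _ _).of_isClosed_subset
      (isClosed_tsupport _) (h1 k).2
    obtain ⟨a, ha⟩ := (hc.iteratedFDeriv (𝕜 := ℝ) i).exists_bound_of_continuous
      ((h1 k).1.continuous_iteratedFDeriv (by exact_mod_cast le_top))
    exact ⟨a, ha⟩
  choose a ha using this
  set B := 1 + ∑ k ∈ S, ∑ i ∈ Finset.range (r + 1), |a k i| with hBdef
  have hB0 : 0 < B := by positivity
  have hB : ∀ k ∈ S, ∀ i ≤ r, ∀ y, ‖iteratedFDeriv ℝ i (φ k) y‖ ≤ B := fun k hk i hi y => by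
    have e1 : |a k i| ≤ ∑ i ∈ Finset.range (r + 1), |a k i| :=
      Finset.single_le_sum (f := fun i => |a k i|) (fun _ _ => abs_nonneg _)
        (Finset.mem_range.2 (by omega))
    have e2 : ∑ i ∈ Finset.range (r + 1), |a k i| ≤ ∑ k ∈ S, ∑ i ∈ Finset.range (r + 1), |a k i| :=
      Finset.single_le_sum (f := fun k => ∑ i ∈ Finset.range (r + 1), |a k i|)
        (fun _ _ => Finset.sum_nonneg fun _ _ => abs_nonneg _) hk
    linarith [ha k i y, le_abs_self (a k i)]
  refine ⟨B⁻¹, by positivity, fun k => B⁻¹ • φ k, fun k hk => ?_, fun k hk j hj => ?_⟩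
  · have hs : Sm (B⁻¹ • φ k) := contDiff_const.smul (h1 k).1
    refine ⟨hs, hs.nat r, (closure_mono (Function.support_const_smul_subset _ _)).trans (h1 k).2,
      fun i hi y => ?_⟩
    rw [iteratedFDeriv_const_smul_apply ((h1 k).1.nat i).contDiffAt, norm_smul, Real.norm_eq_abs,
      abs_of_pos (by positivity), inv_mul_le_iff₀ hB0, mul_one]
    exact hB k hk i hi y
  · simp only [Pi.smul_apply, smul_eq_mul]
    rw [show (fun z => mono j z * (B⁻¹ * φ k z)) = fun z => B⁻¹ * (mono j z * φ k z) by
      funext z; ring, integral_const_mul, h2 k hk j hj]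
    split_ifs <;> simp

lemma integral_mono_scal (k : Fin d → ℕ) (φ : Rd d → ℝ) (x : Rd d) {l : ℝ} (hl : 0 < l) :
    ∫ z, mono k (z - x) * scal φ x l z = l ^ wt k * ∫ z, mono k z * φ z := by
  have h1 : ∀ z, mono k (z - x) * scal φ x l z =
      (fun w => (l ^ d)⁻¹ * (l ^ wt k * (mono k (l⁻¹ • w) * φ (l⁻¹ • w)))) (z - x) := fun z => by
    simp only [scal, mono_smul]
    rw [inv_pow]
    field_simp
  simp_rw [h1]
  rw [integral_sub_right_eq_self (fun w => (l ^ d)⁻¹ * (l ^ wt k *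
    (mono k (l⁻¹ • w) * φ (l⁻¹ • w)))) x, integral_const_mul, integral_const_mul,
    Measure.integral_comp_inv_smul_of_nonneg volume (fun w => mono k w * φ w) hl.le,
    finrank_euclideanSpace, Fintype.card_fin, smul_eq_mul]
  field_simp

/-- A test function at scale `l` about `x` is, up to a constant, one at scale `2 l` about any
point at distance at most `l`. -/
lemma TestAt.recenter {r : ℕ} {x y : Rd d} {l : ℝ} {ψ : Rd d → ℝ} (h : TestAt r x l ψ)
    (hl : 0 < l) (hxy : dist x y ≤ l) :
    TestAt r y (2 * l) (((2 : ℝ) ^ (d + r))⁻¹ • ψ) := by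
  have h2 : (1 : ℝ) ≤ 2 ^ (d + r) := one_le_pow₀ (by norm_num)
  refine ⟨⟨contDiff_const.smul h.test.sm, h.test.2.smul_left⟩,
    (closure_mono (Function.support_const_smul_subset _ _)).trans (h.supp.trans
      (closedBall_subset_closedBall' (by linarith))), fun i hi z => ?_, ?_⟩
  · rw [iteratedFDeriv_const_smul_apply (h.test.sm.nat i).contDiffAt, norm_smul, Real.norm_eq_abs,
      abs_of_pos (by positivity), inv_mul_le_iff₀ (by positivity), mul_pow]
    refine (h.bd i hi z).trans ?_
    rw [mul_one_div, div_le_div_iff₀ (by positivity) (by positivity), one_mul]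
    refine mul_le_mul_of_nonneg_right ?_ (by positivity)
    exact pow_le_pow_right₀ (by norm_num) (by omega)
  · simp only [Pi.smul_apply, smul_eq_mul, abs_mul]
    rw [integral_const_mul, abs_of_pos (by positivity), inv_mul_le_iff₀ (by positivity)]
    have := vol1_pos d
    nlinarith [h.int]

variable {ι : Type} [Fintype ι] [DecidableEq ι]
  {T : ι → Type} [∀ i, NormedAddCommGroup (T i)] [∀ i, NormedSpace ℝ (T i)]

/-- On points at distance at most `1/4`: the difference `F(x) - Γ_{xy} F(y)` equals
`𝓘(f(x) - Γ_{xy} f(y))`, controlled by the assumption on `f`, plus a polynomial, whose coefficients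
are read off by testing against dual test functions at scale `|x - y|`. -/
lemma near_bound [∀ i, FiniteDimensional ℝ (T i)] {r N : ℕ} {deg : ι → ℝ} {β γ s : ℝ}
    (hs : s = γ + β)
    {G : Set ((∀ i, T i) ≃ₗ[ℝ] (∀ i, T i))}
    (hG : IsStructureGroup deg G)
    {Pmap : Rd d → (∀ i, T i) →ₗ[ℝ] ((Rd d → ℝ) →ₗ[ℝ] ℝ)}
    {Γ : Rd d → Rd d → ((∀ i, T i) ≃ₗ[ℝ] (∀ i, T i))} (hmodel : IsModel r deg G Pmap Γ)
    {Imap : (∀ i, T i) →ₗ[ℝ] (∀ i, T i)} {X : (Fin d → ℕ) → ∀ i, T i}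
    (hXhom : ∀ k : Fin d → ℕ, wt k ≤ N → ∀ j : ι, deg j ≠ (wt k : ℝ) → X k j = 0)
    (hIhom : ∀ (i : ι) (v : T i), ∀ j : ι, deg j ≠ deg i + β →
      Imap (Pi.single i v) j = 0)
    (hadm_poly : ∀ (x : Rd d) (k : Fin d → ℕ), wt k ≤ N →
      ∀ ψ : Rd d → ℝ, IsTestFunction ψ →
        Pmap x (X k) ψ = ∫ y, mono k (y - x) * ψ y)
    {f : Rd d → ∀ i, T i} (hf : InD deg γ Γ f)
    {F : Rd d → ∀ i, T i} {W : (Rd d → ℝ) → ℝ} (hW : ∀ (c : ℝ) ψ, W (c • ψ) = c * W ψ)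
    {R : ℝ} (hst : ∃ C : ℝ, 0 ≤ C ∧ ∀ x ∈ closedBall (0 : Rd d) R, ∀ ψ l, 0 < l → l ≤ 1 / 2 →
      TestAt r x l ψ → |W ψ - Pmap x (F x) ψ| ≤ C * l ^ s)
    (hP : ∀ x y, F x - Γ x y (F y) - Imap (f x - Γ x y (f y)) ∈
      Submodule.span ℝ (X '' {k : Fin d → ℕ | wt k ≤ N})) :
    ∃ C : ℝ, 0 ≤ C ∧ ∀ x ∈ closedBall (0 : Rd d) R, ∀ y ∈ closedBall (0 : Rd d) R,
      ‖x - y‖ ≤ 1 / 4 → ∀ i, ‖(F x - Γ x y (F y)) i‖ ≤ C * ‖x - y‖ ^ (s - deg i) := by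
  obtain ⟨C0, hC0, hst⟩ := hst
  have hcomp := isCompact_closedBall (0 : Rd d) R
  obtain ⟨C1, hC1⟩ := hf.2 _ hcomp
  obtain ⟨C2, hC2, -⟩ := hmodel.2.2.2.2 _ hcomp
  set cI : ℝ := ‖LinearMap.toContinuousLinearMap Imap‖
  have hI : ∀ (i j : ι) (v : T i), ‖Imap (Pi.single i v) j‖ ≤ cI * ‖v‖ := fun i j v => by
    have := (LinearMap.toContinuousLinearMap Imap).le_opNorm (Pi.single i v)
    rw [Pi.norm_single] at this
    exact (norm_le_pi_norm _ j).trans this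
  have hcI : 0 ≤ cI := norm_nonneg _
  set S := multiIdxLt d (N + 1) with hSdef
  have hS : ∀ k, k ∈ S ↔ wt k ≤ N := fun k => by
    rw [hSdef, mem_multiIdxLt]
    norm_cast
    omega
  obtain ⟨b, hb, φ, hφ, hφd⟩ := exists_dual_Br r S
  -- `C3` bounds the pairing of the polynomial part with the dual test functions
  set C3 : ℝ := C0 + 2 ^ (d + r) * C0 * 2 ^ s +
    (Fintype.card ι : ℝ) * ((Fintype.card ι : ℝ) * (|C2| * cI * |C1|)) with hC3
  have hC3' : 0 ≤ C3 := by positivity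
  refine ⟨∑ k ∈ S, C3 / b * ‖X k‖ + (Fintype.card ι : ℝ) * (cI * |C1|), by positivity, ?_⟩
  intro x hx y hy hxy i
  have hΓxx : ∀ x τ, Γ x x τ = τ := fun x τ =>
    (Γ x x).injective (hmodel.2.2.1 x x x τ)
  rcases eq_or_ne x y with rfl | hne
  · rw [hΓxx, sub_self, Pi.zero_apply, norm_zero]
    have : 0 ≤ ∑ k ∈ S, C3 / b * ‖X k‖ := by positivity
    positivity
  set l := ‖x - y‖ with hl
  have hl0 : 0 < l := norm_pos_iff.2 (sub_ne_zero.2 hne)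
  set δ := f x - Γ x y (f y) with hδ
  have hδ1 : ∀ i, ‖δ i‖ ≤ |C1| * l ^ (γ - deg i) := fun i => by
    by_cases hi : γ ≤ deg i
    · rw [hδ, Pi.sub_apply, hf.1 x i hi, group_tri hG (hmodel.1 x y) (hf.1 y) i hi, sub_zero,
        norm_zero]
      positivity
    · exact (hC1 i (lt_of_not_ge hi) x hx y hy).trans
        (mul_le_mul_of_nonneg_right (le_abs_self _) (by positivity))
  have hIδ : Imap δ = ∑ j, Imap (Pi.single j (δ j)) := by
    conv_lhs => rw [← sum_single_eq δ]
    rw [map_sum]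
  obtain ⟨p, hp⟩ : ∃ p : (Fin d → ℕ) → ℝ,
      ∑ k ∈ S, p k • X k = F x - Γ x y (F y) - Imap δ := by
    have := hP x y
    rw [show {k : Fin d → ℕ | wt k ≤ N} = (S : Set (Fin d → ℕ)) by
      ext k; simp [hS], Submodule.mem_span_image_finset_iff_exists_fun] at this
    obtain ⟨c, hc⟩ := this
    refine ⟨fun k => if h : k ∈ S then c ⟨k, h⟩ else 0, ?_⟩
    rw [← hc, ← Finset.sum_coe_sort S]
    exact Finset.sum_congr rfl fun k _ => by simp
  have hpk : ∀ k ∈ S, |p k| ≤ C3 / b * l ^ (s - wt k) := by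
    intro k hk
    set ψ := scal (φ k) x l with hψdef
    have hψ : TestAt r x l ψ := testAt_scal (hφ k hk).2 (hφ k hk).1 x hl0
    have h1 : Pmap x (∑ k ∈ S, p k • X k) ψ = p k * l ^ wt k * b := by
      rw [map_sum, LinearMap.sum_apply, Finset.sum_eq_single k]
      · rw [map_smul, LinearMap.smul_apply, hadm_poly x k ((hS k).1 hk) ψ hψ.test,
          integral_mono_scal _ _ _ hl0, hφd k hk k hk, if_pos rfl, smul_eq_mul]
        ring
      · intro j hj hjk
        rw [map_smul, LinearMap.smul_apply, hadm_poly x j ((hS j).1 hj) ψ hψ.test,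
          integral_mono_scal _ _ _ hl0, hφd k hk j hj, if_neg hjk, mul_zero, smul_zero]
      · exact fun h => absurd hk h
    have h2 : |W ψ - Pmap x (F x) ψ| ≤ C0 * l ^ s := hst x hx ψ l hl0 (by linarith) hψ
    have h3 : |W ψ - Pmap y (F y) ψ| ≤ 2 ^ (d + r) * C0 * 2 ^ s * l ^ s := by
      have := hst y hy _ (2 * l) (by linarith) (by linarith)
        (hψ.recenter hl0 (by rw [dist_eq_norm]))
      rw [hW, map_smul, smul_eq_mul, ← mul_sub, abs_mul, abs_of_pos (by positivity),
        inv_mul_le_iff₀ (by positivity), Real.mul_rpow (by norm_num) hl0.le] at this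
      refine this.trans (le_of_eq (by ring))
    have h4 : |Pmap x (Imap δ) ψ| ≤
        (Fintype.card ι : ℝ) * ((Fintype.card ι : ℝ) * (|C2| * cI * |C1|)) * l ^ s := by
      have e : ∀ i j, |Pmap x (Pi.single j (Imap (Pi.single i (δ i)) j)) ψ| ≤
          |C2| * cI * |C1| * l ^ s := by
        intro i j
        by_cases hij : deg j = deg i + β
        · refine (hC2 j _ x hx (φ k) (hφ k hk).2 l hl0 (by linarith)).trans ?_
          calc _ ≤ |C2| * l ^ deg j * (cI * (|C1| * l ^ (γ - deg i))) := by
                gcongr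
                · exact le_abs_self _
                · exact (hI i j _).trans (mul_le_mul_of_nonneg_left (hδ1 i) hcI)
            _ = |C2| * cI * |C1| * (l ^ deg j * l ^ (γ - deg i)) := by ring
            _ = _ := by rw [← Real.rpow_add hl0, hij, hs]; ring_nf
        · rw [hIhom i _ j hij, Pi.single_zero, map_zero, LinearMap.zero_apply, abs_zero]
          positivity
      rw [hIδ, map_sum, LinearMap.sum_apply]
      refine (Finset.abs_sum_le_sum_abs _ _).trans ((Finset.sum_le_card_nsmul _ _
        ((Fintype.card ι : ℝ) * (|C2| * cI * |C1| * l ^ s)) fun i _ => ?_).trans (le_of_eq ?_))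
      · conv_lhs => rw [← sum_single_eq (Imap (Pi.single i (δ i)))]
        rw [map_sum, LinearMap.sum_apply]
        refine (Finset.abs_sum_le_sum_abs _ _).trans ((Finset.sum_le_card_nsmul _ _ _
          fun j _ => e i j).trans (le_of_eq ?_))
        rw [nsmul_eq_mul, Finset.card_univ]
      · rw [nsmul_eq_mul, Finset.card_univ]; ring
    rw [hp, map_sub, map_sub, LinearMap.sub_apply, LinearMap.sub_apply,
      hmodel.2.2.2.1 x y (F y) ψ] at h1
    -- since `Π_x Γ_{xy} = Π_y`, the two local expansions of `W` may be subtracted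
    have h5 : |p k| * l ^ wt k * b ≤ C3 * l ^ s := by
      have : |p k| * l ^ wt k * b = |p k * l ^ wt k * b| := by
        rw [abs_mul, abs_mul, abs_of_pos hb, abs_of_pos (pow_pos hl0 _)]
      rw [this, ← h1, hC3]
      have e : Pmap x (F x) ψ - Pmap y (F y) ψ - Pmap x (Imap δ) ψ =
        -(W ψ - Pmap x (F x) ψ) + (W ψ - Pmap y (F y) ψ) - Pmap x (Imap δ) ψ := by ring
      rw [e]
      refine (abs_sub _ _).trans ?_
      have := abs_add_le (-(W ψ - Pmap x (F x) ψ)) (W ψ - Pmap y (F y) ψ)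
      rw [abs_neg] at this
      linarith
    rw [Real.rpow_sub hl0, Real.rpow_natCast, div_mul_div_comm, le_div_iff₀ (by positivity)]
    linarith
  have hD : (F x - Γ x y (F y)) i = ∑ k ∈ S, p k • X k i + Imap δ i := by
    have := congrFun hp i
    rw [Finset.sum_apply, Pi.sub_apply] at this
    simp only [Pi.smul_apply] at this
    rw [this, sub_add_cancel]
  rw [hD, add_mul]
  refine (norm_add_le _ _).trans (add_le_add ?_ ?_)
  · rw [Finset.sum_mul]
    refine (norm_sum_le _ _).trans (Finset.sum_le_sum fun k hk => ?_)
    by_cases hki : deg i = wt k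
    · rw [norm_smul, Real.norm_eq_abs, hki]
      calc _ ≤ C3 / b * l ^ (s - wt k) * ‖X k‖ :=
            mul_le_mul (hpk k hk) (norm_le_pi_norm _ i) (norm_nonneg _) (by positivity)
        _ = _ := by ring
    · rw [hXhom k ((hS k).1 hk) i hki, smul_zero, norm_zero]
      positivity
  · rw [hIδ, Finset.sum_apply]
    refine (norm_sum_le _ _).trans ((Finset.sum_le_card_nsmul _ _
      (cI * |C1| * l ^ (s - deg i)) fun j _ => ?_).trans (le_of_eq ?_))
    · by_cases hij : deg i = deg j + β
      · refine (hI j i _).trans ?_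
        rw [mul_assoc]
        refine mul_le_mul_of_nonneg_left ((hδ1 j).trans (le_of_eq ?_)) hcI
        rw [hij, hs]; ring_nf
      · rw [hIhom j _ i hij, norm_zero]
        positivity
    · rw [nsmul_eq_mul, Finset.card_univ]; ring

/-- The maps `Γ_{xy}` are bounded, locally uniformly in `x, y`. -/
lemma Gamma_bounded {r : ℕ} {deg : ι → ℝ} {G : Set ((∀ i, T i) ≃ₗ[ℝ] (∀ i, T i))}
    (hG : IsStructureGroup deg G)
    {Pmap : Rd d → (∀ i, T i) →ₗ[ℝ] ((Rd d → ℝ) →ₗ[ℝ] ℝ)}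
    {Γ : Rd d → Rd d → ((∀ i, T i) ≃ₗ[ℝ] (∀ i, T i))} (hmodel : IsModel r deg G Pmap Γ)
    {R : ℝ} (hR : 0 ≤ R) :
    ∃ C : ℝ, 0 ≤ C ∧ ∀ x ∈ closedBall (0 : Rd d) R, ∀ y ∈ closedBall (0 : Rd d) R, ∀ τ,
      ‖Γ x y τ‖ ≤ C * ‖τ‖ := by
  obtain ⟨C, -, hC⟩ := hmodel.2.2.2.2 _ (isCompact_closedBall (0 : Rd d) R)
  have hnn : ∀ i j, 0 ≤ 1 + |C| * (2 * R) ^ (deg i - deg j) := fun i j => by positivity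
  refine ⟨∑ j, ∑ i, (1 + |C| * (2 * R) ^ (deg i - deg j)), by positivity,
    fun x hx y hy τ => ?_⟩
  refine (pi_norm_le_iff_of_nonneg (by positivity)).2 fun j => ?_
  have h1 : ‖Γ x y τ j‖ ≤ ∑ i, (1 + |C| * (2 * R) ^ (deg i - deg j)) * ‖τ‖ := by
    conv_lhs => rw [← sum_single_eq τ]
    rw [map_sum, Finset.sum_apply]
    refine (norm_sum_le _ _).trans (Finset.sum_le_sum fun i _ => ?_)
    rcases lt_or_ge (deg j) (deg i) with hij | hij
    · refine (hC i j hij (τ i) x hx y hy).trans ?_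
      have hxy : ‖x - y‖ ≤ 2 * R := by
        rw [mem_closedBall, dist_zero_right] at hx hy
        exact (norm_sub_le _ _).trans (by linarith)
      calc _ ≤ |C| * (2 * R) ^ (deg i - deg j) * ‖τ‖ := by
            gcongr
            · exact le_abs_self _
            · exact norm_le_pi_norm τ i
        _ ≤ _ := by gcongr; linarith
    · have h2 := hG.2.2.2 _ (hmodel.1 x y) i (τ i) j hij
      rw [Pi.sub_apply, sub_eq_zero] at h2
      rw [h2]
      have h3 : ‖(Pi.single i (τ i) : ∀ i, T i) j‖ ≤ ‖τ‖ :=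
        ((norm_le_pi_norm _ j).trans (Pi.norm_single (τ i)).le).trans (norm_le_pi_norm τ i)
      have : 0 ≤ |C| * (2 * R) ^ (deg i - deg j) * ‖τ‖ := by positivity
      linarith
  refine h1.trans ?_
  rw [← Finset.sum_mul]
  exact mul_le_mul_of_nonneg_right (Finset.single_le_sum
    (f := fun j => ∑ i, (1 + |C| * (2 * R) ^ (deg i - deg j)))
    (fun j _ => Finset.sum_nonneg fun i _ => hnn i j) (Finset.mem_univ j)) (norm_nonneg _)

/-- Estimates on nearby points imply membership in `D^s`, by repeatedly inserting midpoints. -/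
lemma inD_of_near {r : ℕ} {deg : ι → ℝ} {s : ℝ} {G : Set ((∀ i, T i) ≃ₗ[ℝ] (∀ i, T i))}
    (hG : IsStructureGroup deg G)
    {Pmap : Rd d → (∀ i, T i) →ₗ[ℝ] ((Rd d → ℝ) →ₗ[ℝ] ℝ)}
    {Γ : Rd d → Rd d → ((∀ i, T i) ≃ₗ[ℝ] (∀ i, T i))} (hmodel : IsModel r deg G Pmap Γ)
    {F : Rd d → ∀ i, T i} (hF : ∀ (x : Rd d) (i : ι), s ≤ deg i → F x i = 0)
    (hnear : ∀ R : ℝ, ∃ C : ℝ, 0 ≤ C ∧ ∀ x ∈ closedBall (0 : Rd d) R,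
      ∀ y ∈ closedBall (0 : Rd d) R,
      ‖x - y‖ ≤ 1 / 4 → ∀ i, ‖(F x - Γ x y (F y)) i‖ ≤ C * ‖x - y‖ ^ (s - deg i)) :
    InD deg s Γ F := by
  refine ⟨hF, fun K hK => ?_⟩
  obtain ⟨R, hR0, hR⟩ : ∃ R : ℝ, 0 ≤ R ∧ K ⊆ closedBall 0 R := by
    obtain ⟨R, hR⟩ := hK.isBounded.subset_closedBall (0 : Rd d)
    exact ⟨max R 0, le_max_right _ _, hR.trans (closedBall_subset_closedBall (le_max_left _ _))⟩
  obtain ⟨C, hC0, hC⟩ := hnear R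
  obtain ⟨CG, hCG0, hCG⟩ := Gamma_bounded hG hmodel hR0
  have hchain : ∀ n : ℕ, ∃ C' : ℝ, 0 ≤ C' ∧ ∀ x ∈ closedBall (0 : Rd d) R,
      ∀ y ∈ closedBall (0 : Rd d) R, ‖x - y‖ ≤ 2 ^ n * (1 / 4) →
        ‖F x - Γ x y (F y)‖ ≤ C' := by
    intro n
    induction n with
    | zero =>
      refine ⟨C, hC0, fun x hx y hy hxy => (pi_norm_le_iff_of_nonneg hC0).2 fun i => ?_⟩
      have hxy' : ‖x - y‖ ≤ 1 / 4 := by simpa using hxy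
      by_cases hi : s ≤ deg i
      · rw [Pi.sub_apply, hF x i hi, group_tri hG (hmodel.1 x y) (hF y) i hi, sub_zero, norm_zero]
        exact hC0
      · refine (hC x hx y hy hxy' i).trans (mul_le_of_le_one_right hC0 ?_)
        exact Real.rpow_le_one (norm_nonneg _) (by linarith) (by linarith [not_le.1 hi])
    | succ n ih =>
      obtain ⟨C', hC', h⟩ := ih
      refine ⟨C' + CG * C', by positivity, fun x hx y hy hxy => ?_⟩
      set z := midpoint ℝ x y
      have hz : z ∈ closedBall (0 : Rd d) R := (convex_closedBall _ _).midpoint_mem hx hy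
      have hxz : ‖x - z‖ ≤ 2 ^ n * (1 / 4) := by
        rw [← dist_eq_norm, dist_left_midpoint, dist_eq_norm, Real.norm_ofNat]
        rw [pow_succ] at hxy
        linarith
      have hzy : ‖z - y‖ ≤ 2 ^ n * (1 / 4) := by
        rw [← dist_eq_norm, dist_midpoint_right, dist_eq_norm, Real.norm_ofNat]
        rw [pow_succ] at hxy
        linarith
      have e : F x - Γ x y (F y) = (F x - Γ x z (F z)) + Γ x z (F z - Γ z y (F y)) := by
        rw [map_sub, hmodel.2.2.1]; abel
      rw [e]
      refine (norm_add_le _ _).trans (add_le_add (h x hx z hz hxz) ?_)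
      exact (hCG x hx z hz _).trans (mul_le_mul_of_nonneg_left (h z hz y hy hzy) hCG0)
  obtain ⟨n, hn⟩ : ∃ n : ℕ, 8 * R ≤ 2 ^ n := by
    obtain ⟨n, hn⟩ := pow_unbounded_of_one_lt (8 * R) (by norm_num : (1 : ℝ) < 2)
    exact ⟨n, hn.le⟩
  obtain ⟨C', hC', h⟩ := hchain n
  refine ⟨C + ∑ i, C' * (4 : ℝ) ^ (s - deg i), fun i hi x hx y hy => ?_⟩
  have hsum : C' * (4 : ℝ) ^ (s - deg i) ≤ ∑ i, C' * (4 : ℝ) ^ (s - deg i) :=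
    Finset.single_le_sum (f := fun i => C' * (4 : ℝ) ^ (s - deg i))
      (fun i _ => by positivity) (Finset.mem_univ i)
  have hsum0 : 0 ≤ ∑ i, C' * (4 : ℝ) ^ (s - deg i) :=
    Finset.sum_nonneg fun i _ => by positivity
  have hrn : 0 ≤ ‖x - y‖ ^ (s - deg i) := by positivity
  rcases le_or_gt ‖x - y‖ (1 / 4) with hxy | hxy
  · refine (hC x (hR hx) y (hR hy) hxy i).trans (mul_le_mul_of_nonneg_right ?_ hrn)
    linarith
  · have hx' := hR hx
    have hy' := hR hy
    have h1 := (norm_le_pi_norm _ i).trans (h x hx' y hy' (by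
      rw [mem_closedBall, dist_zero_right] at hx' hy'
      have := norm_sub_le x y
      linarith))
    refine h1.trans ?_
    have h2 : (1 : ℝ) ≤ 4 ^ (s - deg i) * ‖x - y‖ ^ (s - deg i) := by
      rw [← Real.mul_rpow (by norm_num) (norm_nonneg _)]
      exact Real.one_le_rpow (by linarith) (by linarith)
    calc C' ≤ C' * (4 ^ (s - deg i) * ‖x - y‖ ^ (s - deg i)) := le_mul_of_one_le_right hC' h2
      _ = C' * 4 ^ (s - deg i) * ‖x - y‖ ^ (s - deg i) := by ring
      _ ≤ _ := mul_le_mul_of_nonneg_right (by linarith) hrn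

end Membership

/-! ### The increments of `𝓚f` -/

section Kmap

variable {d : ℕ} {ι : Type} [Fintype ι] [DecidableEq ι]
  {T : ι → Type} [∀ i, NormedAddCommGroup (T i)] [∀ i, NormedSpace ℝ (T i)]

lemma sum_X_mem {N : ℕ} {c : ℝ} (hc : c ≤ N) {X : (Fin d → ℕ) → ∀ i, T i}
    (a : (Fin d → ℕ) → ℝ) :
    ∑ k ∈ multiIdxLt d c, a k • X k ∈ Submodule.span ℝ (X '' {k : Fin d → ℕ | wt k ≤ N}) := by
  refine Submodule.sum_mem _ fun k hk => Submodule.smul_mem _ _ (Submodule.subset_span ⟨k, ?_, rfl⟩)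
  have := mem_multiIdxLt.1 hk
  exact_mod_cast (this.trans_le hc).le

lemma sum_X_apply {N : ℕ} {c : ℝ} (hc : c ≤ N) {deg : ι → ℝ} {X : (Fin d → ℕ) → ∀ i, T i}
    (hXhom : ∀ k : Fin d → ℕ, wt k ≤ N → ∀ j : ι, deg j ≠ (wt k : ℝ) → X k j = 0)
    (a : (Fin d → ℕ) → ℝ) {i : ι} (hi : c ≤ deg i) :
    (∑ k ∈ multiIdxLt d c, a k • X k) i = 0 := by
  rw [Finset.sum_apply]
  refine Finset.sum_eq_zero fun k hk => ?_
  have h := mem_multiIdxLt.1 hk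
  rw [Pi.smul_apply, hXhom k (by exact_mod_cast (h.trans_le hc).le) i (h.trans_le hi).ne', smul_zero]

lemma Kmap_apply_eq_zero {N : ℕ} {deg : ι → ℝ} {β γ : ℝ} (hγN : γ < (N : ℝ) - β)
    (Pmap : Rd d → (∀ i, T i) →ₗ[ℝ] ((Rd d → ℝ) →ₗ[ℝ] ℝ))
    {Imap : (∀ i, T i) →ₗ[ℝ] (∀ i, T i)} {X : (Fin d → ℕ) → ∀ i, T i}
    (hXhom : ∀ k : Fin d → ℕ, wt k ≤ N → ∀ j : ι, deg j ≠ (wt k : ℝ) → X k j = 0)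
    (hIhom : ∀ (i : ι) (v : T i), ∀ j : ι, deg j ≠ deg i + β →
      Imap (Pi.single i v) j = 0)
    (Kn : ℕ → Rd d → ℝ) {f : Rd d → ∀ i, T i}
    (hf : ∀ (x : Rd d) (i : ι), γ ≤ deg i → f x i = 0)
    (Rf : (Rd d → ℝ) →ₗ[ℝ] ℝ) (x : Rd d) (i : ι) (hi : γ + β ≤ deg i) :
    Kmap deg β γ Pmap Imap Kn X f Rf x i = 0 := by
  have h1 : Imap (f x) i = 0 := by
    rw [← sum_single_eq (f x), map_sum, Finset.sum_apply]
    refine Finset.sum_eq_zero fun j _ => ?_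
    by_cases hj : γ ≤ deg j
    · rw [hf x j hj]; simp
    · exact hIhom j _ i (by intro h; apply hj; linarith)
  have h2 : Jmap deg β Pmap Kn X x (f x) i = 0 := by
    rw [Jmap, Finset.sum_apply]
    refine Finset.sum_eq_zero fun j _ => ?_
    by_cases hj : γ ≤ deg j
    · rw [hf x j hj]; simp
    · exact sum_X_apply (by linarith) hXhom _ (by linarith)
  have h3 : Nmap (γ + β) Pmap Rf Kn X f x i = 0 := sum_X_apply (by linarith) hXhom _ hi
  rw [Kmap, Pi.add_apply, Pi.add_apply, h1, h2, h3]; simp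

lemma Jmap_mem {N : ℕ} {deg : ι → ℝ} {β γ : ℝ} (hγN : γ < (N : ℝ) - β)
    (Pmap : Rd d → (∀ i, T i) →ₗ[ℝ] ((Rd d → ℝ) →ₗ[ℝ] ℝ))
    (X : (Fin d → ℕ) → ∀ i, T i) (Kn : ℕ → Rd d → ℝ) {τ : ∀ i, T i}
    (hτ : ∀ i : ι, γ ≤ deg i → τ i = 0) (x : Rd d) :
    Jmap deg β Pmap Kn X x τ ∈ Submodule.span ℝ (X '' {k : Fin d → ℕ | wt k ≤ N}) := by
  refine Submodule.sum_mem _ fun j _ => ?_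
  by_cases hj : γ ≤ deg j
  · rw [hτ j hj]; simp
  · exact sum_X_mem (by linarith) _

/-- The structure group preserves the polynomial sector. -/
lemma group_span {N : ℕ} {G : Set ((∀ i, T i) ≃ₗ[ℝ] (∀ i, T i))} {X : (Fin d → ℕ) → ∀ i, T i}
    (hXact : ∀ g ∈ G, ∃ h : Rd d, ∀ k : Fin d → ℕ, wt k ≤ N →
      g (X k) = ∑ m ∈ Finset.Iic k,
        (((∏ j, (k j).choose (m j)) : ℕ) : ℝ) •
          ((∏ j, (-(h j)) ^ (k j - m j)) • X m))
    {g : (∀ i, T i) ≃ₗ[ℝ] (∀ i, T i)} (hg : g ∈ G) {τ : ∀ i, T i}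
    (hτ : τ ∈ Submodule.span ℝ (X '' {k : Fin d → ℕ | wt k ≤ N})) :
    g τ ∈ Submodule.span ℝ (X '' {k : Fin d → ℕ | wt k ≤ N}) := by
  obtain ⟨h, hh⟩ := hXact g hg
  induction hτ using Submodule.span_induction with
  | mem τ hτ =>
    obtain ⟨k, hk, rfl⟩ := hτ
    rw [hh k hk]
    refine Submodule.sum_mem _ fun m hm => Submodule.smul_mem _ _ (Submodule.smul_mem _ _
      (Submodule.subset_span ⟨m, ?_, rfl⟩))
    exact (Finset.sum_le_sum fun j _ => Finset.mem_Iic.1 hm j).trans hk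
  | zero => simp
  | add a b _ _ ha hb => rw [map_add]; exact Submodule.add_mem _ ha hb
  | smul c a _ ha => rw [map_smul]; exact Submodule.smul_mem _ _ ha

/-- The increments of `𝓚 f` and those of `𝓘 f` differ by polynomials. -/
lemma Kmap_increment_mem {N : ℕ} {deg : ι → ℝ} {β γ : ℝ} (hγN : γ < (N : ℝ) - β)
    {G : Set ((∀ i, T i) ≃ₗ[ℝ] (∀ i, T i))}
    (Pmap : Rd d → (∀ i, T i) →ₗ[ℝ] ((Rd d → ℝ) →ₗ[ℝ] ℝ))
    {Imap : (∀ i, T i) →ₗ[ℝ] (∀ i, T i)} {X : (Fin d → ℕ) → ∀ i, T i}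
    (hXact : ∀ g ∈ G, ∃ h : Rd d, ∀ k : Fin d → ℕ, wt k ≤ N →
      g (X k) = ∑ m ∈ Finset.Iic k,
        (((∏ j, (k j).choose (m j)) : ℕ) : ℝ) •
          ((∏ j, (-(h j)) ^ (k j - m j)) • X m))
    (hIcomm : ∀ g ∈ G, ∀ τ : ∀ i, T i,
      g (Imap τ) - Imap (g τ) ∈
        Submodule.span ℝ (X '' {k : Fin d → ℕ | wt k ≤ N}))
    (Kn : ℕ → Rd d → ℝ) {f : Rd d → ∀ i, T i}
    (hf : ∀ (x : Rd d) (i : ι), γ ≤ deg i → f x i = 0)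
    (Rf : (Rd d → ℝ) →ₗ[ℝ] ℝ) {g : (∀ i, T i) ≃ₗ[ℝ] (∀ i, T i)} (hg : g ∈ G) (x y : Rd d) :
    Kmap deg β γ Pmap Imap Kn X f Rf x - g (Kmap deg β γ Pmap Imap Kn X f Rf y) -
      Imap (f x - g (f y)) ∈ Submodule.span ℝ (X '' {k : Fin d → ℕ | wt k ≤ N}) := by
  have hQ : ∀ x, Jmap deg β Pmap Kn X x (f x) + Nmap (γ + β) Pmap Rf Kn X f x ∈
      Submodule.span ℝ (X '' {k : Fin d → ℕ | wt k ≤ N}) := fun x =>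
    Submodule.add_mem _ (Jmap_mem hγN Pmap X Kn (hf x) x) (sum_X_mem (by linarith) _)
  have h := Submodule.sub_mem _ (Submodule.sub_mem _ (hQ x) (group_span hXact hg (hQ y)))
    (hIcomm g hg (f y))
  convert h using 1
  simp only [Kmap, map_add, map_sub]
  abel

end Kmap

/-! ### Uniqueness of the reconstruction -/

section Uniqueness

variable {d : ℕ}

/-- A smooth bump supported in `[-1, 1]` whose integer translates sum to one. -/
def theta (t : ℝ) : ℝ := Real.smoothTransition (t + 1) - Real.smoothTransition t

lemma theta_eq_zero {t : ℝ} (h : 1 < |t|) : theta t = 0 := by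
  rcases lt_abs.1 h with h | h
  · rw [theta, Real.smoothTransition.one_of_one_le (by linarith),
      Real.smoothTransition.one_of_one_le (by linarith), sub_self]
  · rw [theta, Real.smoothTransition.zero_of_nonpos (by linarith),
      Real.smoothTransition.zero_of_nonpos (by linarith), sub_self]

lemma sum_theta {m : ℕ} {t : ℝ} (ht : |t| ≤ m) :
    ∑ k ∈ Finset.range (2 * m + 1), theta (t + m - k) = 1 := by
  have h := Finset.sum_range_sub' (fun i : ℕ => Real.smoothTransition (t + m + 1 - i)) (2 * m + 1)
  have h1 := abs_le.1 ht
  rw [Real.smoothTransition.one_of_one_le (x := t + m + 1 - ((0 : ℕ) : ℝ))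
      (by push_cast; linarith),
    Real.smoothTransition.zero_of_nonpos (x := t + m + 1 - ((2 * m + 1 : ℕ) : ℝ))
      (by push_cast; linarith), sub_zero] at h
  rw [← h]
  refine Finset.sum_congr rfl fun k _ => ?_
  rw [theta]
  congr 2 <;> push_cast <;> ring

/-- The `d`-dimensional bump `∏ⱼ θ(yⱼ)`. -/
def bump (y : Rd d) : ℝ := ∏ j, theta (y j)

lemma bump_smooth : Sm (bump : Rd d → ℝ) := by
  refine contDiff_prod fun j _ => ?_
  have h : ContDiff ℝ (⊤ : ℕ∞) fun y : Rd d => y j :=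
    (EuclideanSpace.proj j : Rd d →L[ℝ] ℝ).contDiff
  exact (Real.smoothTransition.contDiff.comp (h.add contDiff_const)).sub
    (Real.smoothTransition.contDiff.comp h)

lemma norm_le_sum_abs (v : Rd d) : ‖v‖ ≤ ∑ j, |v j| := by
  rw [EuclideanSpace.norm_eq]
  refine Real.sqrt_le_iff.2 ⟨Finset.sum_nonneg fun _ _ => abs_nonneg _, ?_⟩
  exact Finset.sum_sq_le_sq_sum_of_nonneg fun _ _ => abs_nonneg _

lemma norm_le_of_forall {v : Rd d} {c : ℝ} (h : ∀ j, |v j| ≤ c) : ‖v‖ ≤ d * c :=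
  (norm_le_sum_abs v).trans ((Finset.sum_le_sum fun j _ => h j).trans (by simp))

lemma norm_le_of_bump_ne_zero {y : Rd d} (h : bump y ≠ 0) : ‖y‖ ≤ d := by
  have := norm_le_of_forall (v := y) (c := 1) fun j => by
    by_contra hj
    exact h (Finset.prod_eq_zero (Finset.mem_univ j) (theta_eq_zero (not_le.1 hj)))
  simpa using this

/-- The iterated derivatives up to order `r` of a test function have a common bound. -/
lemma exists_iterD_bound {ψ : Rd d → ℝ} (hψ : IsTestFunction ψ) (r : ℕ) :
    ∃ a : ℝ, 0 < a ∧ ∀ i ≤ r, ∀ y, ‖iteratedFDeriv ℝ i ψ y‖ ≤ a := by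
  have : ∀ i, ∃ a : ℝ, ∀ y, ‖iteratedFDeriv ℝ i ψ y‖ ≤ a := fun i => by
    obtain ⟨a, ha⟩ := (hψ.2.iteratedFDeriv (𝕜 := ℝ) i).exists_bound_of_continuous
      (hψ.1.continuous_iteratedFDeriv (by exact_mod_cast le_top))
    exact ⟨a, ha⟩
  choose a ha using this
  refine ⟨1 + ∑ i ∈ Finset.range (r + 1), |a i|, ?_, fun i hi y => ?_⟩
  · have := Finset.sum_nonneg (s := Finset.range (r + 1)) fun i _ => abs_nonneg (a i)
    linarith
  · have e1 : |a i| ≤ ∑ i ∈ Finset.range (r + 1), |a i| :=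
      Finset.single_le_sum (f := fun i => |a i|) (fun _ _ => abs_nonneg _)
        (Finset.mem_range.2 (by omega))
    linarith [ha i y, le_abs_self (a i)]

lemma bump_test : IsTestFunction (bump : Rd d → ℝ) := by
  refine ⟨bump_smooth, (isCompact_closedBall (0 : Rd d) d).of_isClosed_subset
    (isClosed_tsupport _) (closure_minimal (fun y hy => ?_) isClosed_closedBall)⟩
  rw [mem_closedBall, dist_zero_right]
  exact norm_le_of_bump_ne_zero hy

/-- The cell of index `k` in the partition of unity at scale `1/p`. -/
def cell (p m : ℕ) (k : Fin d → ℕ) (y : Rd d) : ℝ :=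
  bump (WithLp.toLp 2 (fun j => (m : ℝ) - k j) + (p : ℝ) • y)

lemma sum_cell {p m : ℕ} {y : Rd d} (hy : (p : ℝ) * ‖y‖ ≤ m) :
    ∑ k ∈ Fintype.piFinset fun _ : Fin d => Finset.range (2 * m + 1), cell p m k y = 1 := by
  have h : ∀ j : Fin d, ∑ k ∈ Finset.range (2 * m + 1), theta (p * y j + m - k) = 1 :=
    fun j => sum_theta (by
      rw [abs_mul, Nat.abs_cast]
      refine le_trans ?_ hy
      gcongr
      simpa using PiLp.norm_apply_le y j)
  have h2 := Finset.prod_univ_sum (fun _ : Fin d => Finset.range (2 * m + 1))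
    (fun j k => theta (p * y j + m - k))
  rw [Finset.prod_congr rfl fun j _ => h j, Finset.prod_const_one] at h2
  rw [h2]
  refine Finset.sum_congr rfl fun k _ => ?_
  rw [cell, bump]
  refine Finset.prod_congr rfl fun j _ => ?_
  congr 1
  simp only [PiLp.add_apply, PiLp.smul_apply, smul_eq_mul]
  ring

/-- The centre of the cell of index `k`. -/
def centre (p m : ℕ) (k : Fin d → ℕ) : Rd d :=
  WithLp.toLp 2 fun j => ((k j : ℝ) - m) / p

lemma cell_support {p m : ℕ} (hp : 0 < p) (k : Fin d → ℕ) {y : Rd d} (hy : cell p m k y ≠ 0) :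
    y ∈ closedBall (centre p m k) ((d + 1) / p) := by
  have h := norm_le_of_bump_ne_zero hy
  have hp' : (0 : ℝ) < p := by exact_mod_cast hp
  have e : WithLp.toLp 2 (fun j => (m : ℝ) - k j) + (p : ℝ) • y =
      (p : ℝ) • (y - centre p m k) := by
    ext j
    simp only [PiLp.add_apply, PiLp.smul_apply, PiLp.sub_apply, smul_eq_mul, centre]
    field_simp
    ring
  rw [e, norm_smul, Real.norm_eq_abs, abs_of_pos hp'] at h
  rw [mem_closedBall, dist_eq_norm, le_div_iff₀ hp']
  linarith

lemma norm_centre_le {p M : ℕ} (hp : 0 < p) {k : Fin d → ℕ}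
    (hk : k ∈ Fintype.piFinset fun _ : Fin d => Finset.range (2 * (M * p) + 1)) :
    ‖centre p (M * p) k‖ ≤ d * M := by
  have hp' : (0 : ℝ) < p := by exact_mod_cast hp
  refine norm_le_of_forall fun j => ?_
  have h1 := Finset.mem_range.1 (Fintype.mem_piFinset.1 hk j)
  have h2 : (k j : ℝ) ≤ 2 * (M * p) := by exact_mod_cast Nat.lt_succ_iff.1 h1
  simp only [centre]
  rw [abs_div, abs_of_pos hp', div_le_iff₀ hp', abs_le]
  push_cast
  constructor
  · have : (0 : ℝ) ≤ k j := Nat.cast_nonneg _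
    linarith
  · linarith

/-- A linear functional that is of order `l ^ s`, `s > 0`, on test functions at scale `l`
vanishes: cut a test function with a partition of unity at scale `1/p` into about `p ^ d` pieces,
each contributing at most a constant times `p ^ (-d - s)`. -/
lemma eq_zero_of_small {r : ℕ} {s : ℝ} (hs : 0 < s) {u : (Rd d → ℝ) →ₗ[ℝ] ℝ}
    (hu : ∀ R : ℝ, ∃ C : ℝ, ∀ x ∈ closedBall (0 : Rd d) R, ∀ φ ∈ Br d r, Sm φ →
      ∀ l : ℝ, 0 < l → l ≤ 1 / 2 → |u (scal φ x l)| ≤ C * l ^ s)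
    {ψ : Rd d → ℝ} (hψ : IsTestFunction ψ) : u ψ = 0 := by
  obtain ⟨M, hM⟩ : ∃ M : ℕ, tsupport ψ ⊆ closedBall 0 M := by
    obtain ⟨R, hR⟩ := hψ.2.isBounded.subset_closedBall (0 : Rd d)
    obtain ⟨M, hM⟩ := exists_nat_ge R
    exact ⟨M, hR.trans (closedBall_subset_closedBall hM)⟩
  obtain ⟨C, hC0, hC⟩ : ∃ C : ℝ, 0 ≤ C ∧ ∀ x ∈ closedBall (0 : Rd d) (d * M), ∀ φ ∈ Br d r,
      Sm φ → ∀ l : ℝ, 0 < l → l ≤ 1 / 2 → |u (scal φ x l)| ≤ C * l ^ s := by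
    obtain ⟨C, hC⟩ := hu (d * M)
    exact ⟨|C|, abs_nonneg _, fun x hx φ hφ hs l hl hl2 => (hC x hx φ hφ hs l hl hl2).trans
      (mul_le_mul_of_nonneg_right (le_abs_self _) (Real.rpow_nonneg hl.le _))⟩
  obtain ⟨a, ha0, ha⟩ := exists_iterD_bound (bump_test (d := d)) r
  obtain ⟨b, hb0, hb⟩ := exists_iterD_bound hψ r
  set E : ℝ := 2 ^ r * a * b * (d + 1) ^ (d + r)
  have hE : 0 < E := by positivity
  have hpiece : ∀ p : ℕ, 2 * (d + 1) ≤ p →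
      ∀ k ∈ Fintype.piFinset fun _ : Fin d => Finset.range (2 * (M * p) + 1),
        |u (ψ * cell p (M * p) k)| ≤ C * ((d + 1) / p) ^ s * (E * ((p : ℝ) ^ d)⁻¹) := by
    intro p hp k hk
    have hp0 : 0 < p := by omega
    have hp' : (1 : ℝ) ≤ p := by exact_mod_cast hp0
    have hpp : (0 : ℝ) < p := by linarith
    have hcs : Sm (cell p (M * p) k : Rd d → ℝ) :=
      bump_smooth.comp (contDiff_const.add (contDiff_const_smul _))
    have hcd : ∀ i ≤ r, ∀ y, ‖iteratedFDeriv ℝ i (cell p (M * p) k : Rd d → ℝ) y‖ ≤ p ^ i * a := by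
      intro i hi y
      have h := norm_iterD_affine (bump_smooth (d := d)) 1 (p : ℝ)
        (WithLp.toLp 2 (fun j => ((M * p : ℕ) : ℝ) - k j)) i y
      simp only [one_mul, abs_one, Nat.abs_cast] at h
      refine (le_of_eq h).trans ?_
      gcongr
      exact ha i hi _
    have hl : (0 : ℝ) < (d + 1) / p := by positivity
    refine apply_le_of_scale (r := r) (x := centre p (M * p) k) hl (fun φ hφ hφs =>
      hC _ ?_ φ hφ hφs _ hl ?_) (hψ.1.mul hcs) ?_ (by positivity) fun i hi y => ?_
    · rw [mem_closedBall, dist_zero_right]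
      exact norm_centre_le hp0 hk
    · rw [div_le_div_iff₀ hpp two_pos]
      have : ((2 * (d + 1) : ℕ) : ℝ) ≤ p := by exact_mod_cast hp
      push_cast at this
      linarith
    · exact closure_minimal (fun y hy => cell_support hp0 k (right_ne_zero_of_mul hy))
        isClosed_closedBall
    · have h1 : ‖iteratedFDeriv ℝ i (ψ * cell p (M * p) k) y‖ ≤ 2 ^ r * a * b * p ^ i := by
        refine (norm_iteratedFDeriv_mul_le (hψ.sm.nat i) (hcs.nat i) y le_rfl).trans ?_
        calc _ ≤ ∑ j ∈ Finset.range (i + 1), (i.choose j : ℝ) * (b * (p ^ i * a)) := by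
              refine Finset.sum_le_sum fun j hj => ?_
              have hj' := Nat.lt_succ_iff.1 (Finset.mem_range.1 hj)
              rw [mul_assoc]
              gcongr
              · exact hb j (hj'.trans hi) y
              · refine (hcd (i - j) (by omega) y).trans ?_
                gcongr
                omega
          _ = 2 ^ i * (b * (p ^ i * a)) := by
              rw [← Finset.sum_mul]
              congr 1
              exact_mod_cast Nat.sum_range_choose i
          _ ≤ 2 ^ r * (b * (p ^ i * a)) := by
              gcongr
              norm_num
          _ = _ := by ring
      calc _ ≤ 2 ^ r * a * b * p ^ i * ((d + 1) / p : ℝ) ^ (d + i) := by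
            gcongr
            exact h1
        _ = 2 ^ r * a * b * (d + 1) ^ (d + i) * ((p : ℝ) ^ d)⁻¹ := by
            rw [div_pow, pow_add (p : ℝ)]
            field_simp
        _ ≤ _ := by
            refine mul_le_mul_of_nonneg_right (mul_le_mul_of_nonneg_left
              (pow_le_pow_right₀ ?_ (by omega)) (by positivity)) (by positivity)
            linarith [Nat.cast_nonneg (α := ℝ) d]
  have hsum : ∀ p : ℕ, 2 * (d + 1) ≤ p →
      |u ψ| ≤ C * E * (2 * M + 1) ^ d * ((d + 1) / p : ℝ) ^ s := by
    intro p hp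
    have hp0 : 0 < p := by omega
    have hp' : (1 : ℝ) ≤ p := by exact_mod_cast hp0
    have hpp : (0 : ℝ) < p := by linarith
    have hdec : ψ = ∑ k ∈ Fintype.piFinset fun _ : Fin d => Finset.range (2 * (M * p) + 1),
        ψ * cell p (M * p) k := by
      funext y
      rw [Finset.sum_apply]
      simp only [Pi.mul_apply]
      rw [← Finset.mul_sum]
      by_cases hy : ψ y = 0
      · rw [hy, zero_mul]
      · have h := hM (subset_tsupport _ hy)
        rw [mem_closedBall, dist_zero_right] at h
        rw [sum_cell (by push_cast; nlinarith), mul_one]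
    rw [hdec, map_sum]
    refine (Finset.abs_sum_le_sum_abs _ _).trans ((Finset.sum_le_sum (hpiece p hp)).trans ?_)
    rw [Finset.sum_const, Fintype.card_piFinset, nsmul_eq_mul]
    simp only [Finset.card_range, Finset.prod_const, Finset.card_univ, Fintype.card_fin]
    push_cast
    have h1 : (2 * (M * p) + 1 : ℝ) ^ d ≤ (2 * M + 1) ^ d * p ^ d := by
      rw [← mul_pow]
      gcongr
      nlinarith
    calc _ ≤ ((2 * M + 1) ^ d * p ^ d : ℝ) *
          (C * ((d + 1) / p) ^ s * (E * ((p : ℝ) ^ d)⁻¹)) := by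
          gcongr
      _ = _ := by field_simp
  have hlim : Tendsto (fun p : ℕ => C * E * (2 * M + 1) ^ d * ((d + 1) / p : ℝ) ^ s) atTop
      (nhds 0) := by
    have h1 : Tendsto (fun p : ℕ => ((d + 1) / p : ℝ)) atTop (nhds 0) :=
      tendsto_const_div_atTop_nhds_zero_nat _
    have h2 := (h1.rpow_const (Or.inr hs.le)).const_mul (C * E * (2 * M + 1) ^ d)
    rwa [Real.zero_rpow hs.ne', mul_zero] at h2
  have h0 : |u ψ| ≤ 0 := ge_of_tendsto hlim
    (eventually_atTop.2 ⟨2 * (d + 1), fun p hp => hsum p hp⟩)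
  exact abs_eq_zero.1 (le_antisymm h0 (abs_nonneg _))

/-- The convolution `K ⋆ ξ` as a functional on test functions, extended linearly to all
functions. -/
lemma exists_conv {β A : ℝ} {m : ℕ} {K : ℕ → Rd d → ℝ} (hK : KerBd d β A m K) (hβ : 0 < β)
    {u : (Rd d → ℝ) →ₗ[ℝ] ℝ} (hu : IsDistribution u) :
    ∃ w : (Rd d → ℝ) →ₗ[ℝ] ℝ, ∀ ψ, IsTestFunction ψ → w ψ = ∑' n, u (cv (K n) ψ) := by
  let S : Submodule ℝ (Rd d → ℝ) :=
    { carrier := {ψ | IsTestFunction ψ}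
      zero_mem' := ⟨contDiff_const, HasCompactSupport.zero⟩
      add_mem' := fun h₁ h₂ => ⟨h₁.1.add h₂.1, h₁.2.add h₂.2⟩
      smul_mem' := fun c _ h => ⟨contDiff_const.smul h.1, h.2.smul_left⟩ }
  let w₀ : S →ₗ[ℝ] ℝ :=
    { toFun := fun ψ => ∑' n, u (cv (K n) ψ)
      map_add' := fun a b => by
        rw [← (summable_cv hK hβ hu a.2).tsum_add (summable_cv hK hβ hu b.2)]
        refine tsum_congr fun n => ?_
        rw [Submodule.coe_add, cv_add (hK.test n).1 a.2 b.2, map_add]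
      map_smul' := fun c a => by
        simp only [Submodule.coe_smul, cv_smul, map_smul, smul_eq_mul, RingHom.id_apply]
        rw [tsum_mul_left] }
  obtain ⟨w, hw⟩ := w₀.exists_extend
  refine ⟨w, fun ψ hψ => ?_⟩
  exact congrArg (fun g => g ⟨ψ, hψ⟩) hw

end Uniqueness


/-- **Multi-level Schauder estimate**: for an admissible model on a regularity structure
containing the polynomial sector and an abstract integration map `𝓘` of order `β`
compatible with a regularising kernel `K = Σ_n K_n`, the operator
`(𝓚f)(x) = 𝓘f(x) + 𝓙(x)f(x) + (𝓝f)(x)` maps `D^γ` to `D^{γ+β}` and realises the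
convolution: `R𝓚f = K * Rf`. -/
theorem multilevel_schauder
    (d r : ℕ) (hd : 1 ≤ d)
    {ι : Type} [Fintype ι] [DecidableEq ι] [Nonempty ι] (deg : ι → ℝ)
    {T : ι → Type} [∀ i, NormedAddCommGroup (T i)] [∀ i, NormedSpace ℝ (T i)]
    [∀ i, FiniteDimensional ℝ (T i)]
    (G : Set ((∀ i, T i) ≃ₗ[ℝ] (∀ i, T i))) (hG : IsStructureGroup deg G)
    (hr : |⨅ i, deg i| < (r : ℝ))
    (Pmap : Rd d → (∀ i, T i) →ₗ[ℝ] ((Rd d → ℝ) →ₗ[ℝ] ℝ))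
    (Γ : Rd d → Rd d → ((∀ i, T i) ≃ₗ[ℝ] (∀ i, T i)))
    (hmodel : IsModel r deg G Pmap Γ)
    (β : ℝ) (hβ : 0 < β) (N : ℕ) (hN : 1 ≤ N)
    -- the polynomial sector, spanned by the symbols X^k for |k| ≤ N
    (X : (Fin d → ℕ) → ∀ i, T i)
    (hXhom : ∀ k : Fin d → ℕ, wt k ≤ N → ∀ j : ι, deg j ≠ (wt k : ℝ) → X k j = 0)
    (hXindep : LinearIndependent ℝ fun k : {k : Fin d → ℕ // wt k ≤ N} => X k.1)
    -- every Γ ∈ G acts on the polynomial sector by X^k ↦ (X-h)^k for some h ∈ ℝ^d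
    (hXact : ∀ g ∈ G, ∃ h : Rd d, ∀ k : Fin d → ℕ, wt k ≤ N →
      g (X k) = ∑ m ∈ Finset.Iic k,
        (((∏ j, (k j).choose (m j)) : ℕ) : ℝ) •
          ((∏ j, (-(h j)) ^ (k j - m j)) • X m))
    -- the abstract integration map 𝓘
    (Imap : (∀ i, T i) →ₗ[ℝ] (∀ i, T i))
    (hIhom : ∀ (i : ι) (v : T i), ∀ j : ι, deg j ≠ deg i + β →
      Imap (Pi.single i v) j = 0)
    (hIpoly : ∀ k : Fin d → ℕ, wt k ≤ N → Imap (X k) = 0)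
    (hIcomm : ∀ g ∈ G, ∀ τ : ∀ i, T i,
      g (Imap τ) - Imap (g τ) ∈
        Submodule.span ℝ (X '' {k : Fin d → ℕ | wt k ≤ N}))
    -- the kernel K = Σ_n K_n
    (Kn : ℕ → Rd d → ℝ) (Cbar : ℝ)
    (hKsmooth : ∀ n, ContDiff ℝ (⊤ : ℕ∞) (Kn n))
    (hKsupp : ∀ n, tsupport (Kn n) ⊆ Metric.closedBall 0 ((2 : ℝ)⁻¹ ^ n))
    (hKbound : ∀ n, ∀ k' : Fin d → ℕ, wt k' ≤ N + r → ∀ y : Rd d,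
      |Dk k' (Kn n) y| ≤ Cbar * (2 : ℝ) ^ ((n : ℝ) * ((d : ℝ) - β + (wt k' : ℝ))))
    (hKmom : ∀ n, ∀ m : Fin d → ℕ, wt m ≤ N → ∫ y, Kn n y * mono m y = 0)
    -- the model is admissible for this kernel
    (hadm_poly : ∀ (x : Rd d) (k : Fin d → ℕ), wt k ≤ N →
      ∀ ψ : Rd d → ℝ, IsTestFunction ψ →
        Pmap x (X k) ψ = ∫ y, mono k (y - x) * ψ y)
    (hadm_int : ∀ (x : Rd d) (i : ι) (v : T i), deg i ≤ (N : ℝ) →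
      ∀ ψ : Rd d → ℝ, IsTestFunction ψ →
        Pmap x (Imap (Pi.single i v)) ψ =
          (∑' n : ℕ, Pmap x (Pi.single i v) fun y => ∫ z, Kn n (z - y) * ψ z) -
          Pmap x (Jmap deg β Pmap Kn X x (Pi.single i v)) ψ)
    -- f ∈ D^γ with 0 < γ < N - β and γ + β ∉ ℕ, and Rf its reconstruction
    (γ : ℝ) (hγ : 0 < γ) (hγN : γ < (N : ℝ) - β) (hγβ : ∀ m : ℕ, γ + β ≠ (m : ℝ))
    (f : Rd d → ∀ i, T i) (hf : InD deg γ Γ f)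
    (Rf : (Rd d → ℝ) →ₗ[ℝ] ℝ) (hRf : Reconstructs r Pmap γ f Rf) :
    InD deg (γ + β) Γ
      (fun x => Imap (f x) + Jmap deg β Pmap Kn X x (f x) +
        Nmap (γ + β) Pmap Rf Kn X f x) ∧
    ∀ ζ : (Rd d → ℝ) →ₗ[ℝ] ℝ,
      Reconstructs r Pmap (γ + β)
        (fun x => Imap (f x) + Jmap deg β Pmap Kn X x (f x) +
          Nmap (γ + β) Pmap Rf Kn X f x) ζ →
      ∀ ψ : Rd d → ℝ, IsTestFunction ψ →
        ζ ψ = ∑' n : ℕ, Rf fun y => ∫ z, Kn n (z - y) * ψ z := by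
  obtain ⟨A, hK⟩ := exists_kerBd (m := N + r) hd hKsmooth hKsupp hKbound
  have hst := local_expansion hG hmodel hadm_poly hadm_int hβ hγ hγN hγβ hK hf hRf
  refine ⟨inD_of_near (F := Kmap deg β γ Pmap Imap Kn X f Rf) hG hmodel
    (Kmap_apply_eq_zero hγN Pmap hXhom hIhom Kn hf.1 Rf)
    fun R => near_bound rfl hG hmodel hXhom hIhom hadm_poly hf
      (W := fun ψ => ∑' n, Rf (cv (Kn n) ψ)) (fun c ψ => ?_) (hst R)
      fun x y => Kmap_increment_mem hγN Pmap hXact hIcomm Kn hf.1 Rf (hmodel.1 x y) x y,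
    fun ζ hζ ψ hψ => ?_⟩
  · simp only [cv_smul, map_smul, smul_eq_mul]
    rw [tsum_mul_left]
  · obtain ⟨w, hw⟩ := exists_conv hK hβ hRf.1
    have h0 : (ζ - w) ψ = 0 := by
      refine eq_zero_of_small (r := r) (s := γ + β) (by linarith) (fun R => ?_) hψ
      obtain ⟨C1, hC1⟩ := hζ.2 _ (isCompact_closedBall (0 : Rd d) R)
      obtain ⟨C2, -, hC2⟩ := hst R
      refine ⟨C1 + C2, fun x hx φ hφ hφs l hl hl2 => ?_⟩
      have h1 := hC1 x hx φ hφ l hl (by linarith)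
      have ht := testAt_scal hφ hφs x hl
      have h2 := hC2 x hx _ l hl hl2 ht
      rw [LinearMap.sub_apply, hw _ ht.test, add_mul]
      have h3 := (abs_sub_le (ζ (scal φ x l)) _ _).trans
        (add_le_add h1 ((abs_sub_comm _ _).trans_le h2))
      exact h3
    rw [LinearMap.sub_apply, hw _ hψ, sub_eq_zero] at h0
    exact h0
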